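/- arXiv:1804.09419 — 2 statements merged into one kernel-verified Lean document; each statement's English description precedes it below -/
import Mathlib

section
/- Let 0<α, 1<p<N/α, 0<β<N/p and q>p−1. Let ω be a nonnegative bounded Radon measure supported in a ball B_R(x0)⊂ℝ^N. If there is C>0 such that ∫_{ℝ^N} (W^{4R}_{α,p}[χ_{B_t(x)}ω](y))^q dy ≤ C·ω(B_t(x)) for every x∈ℝ^N and t>0, then there exists C2>0 such that W^{4R}_{β,p}[(W^{4R}_{α,p}[ω])^q] ≤ C2·W^{4R}_{β,p}[ω] almost everywhere in B_{2R}(x0). -/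
open MeasureTheory Metric Set Filter Bornology
open scoped ENNReal NNReal Topology RealInnerProductSpace

noncomputable section

/-- Euclidean space `ℝ^N`. -/
abbrev Euc (N : ℕ) : Type := EuclideanSpace ℝ (Fin N)

/-- The `R`-truncated Wolff potential `W^R_{α,p}[μ](x)`; `R = ⊤` gives the full
Wolff potential `W_{α,p}[μ]`. -/
def wolff {N : ℕ} (α p : ℝ) (R : ℝ≥0∞) (μ : Measure (Euc N)) (x : Euc N) : ℝ≥0∞ :=
  ∫⁻ ρ in {ρ : ℝ | 0 < ρ ∧ ENNReal.ofReal ρ < R},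
    (μ (ball x ρ) / ENNReal.ofReal (ρ ^ ((N : ℝ) - α * p))) ^ (1 / (p - 1)) /
      ENNReal.ofReal ρ

/-- The `R`-truncated Riesz potential `I^R_β[μ](x)`; `R = ⊤` gives `I_β[μ]`. -/
def rieszPot {N : ℕ} (β : ℝ) (R : ℝ≥0∞) (μ : Measure (Euc N)) (x : Euc N) : ℝ≥0∞ :=
  ∫⁻ ρ in {ρ : ℝ | 0 < ρ ∧ ENNReal.ofReal ρ < R},
    μ (ball x ρ) / ENNReal.ofReal (ρ ^ ((N : ℝ) - β)) / ENNReal.ofReal ρ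

/-- The Riesz capacity `Cap_{I_α,p}`. -/
def rieszCap (N : ℕ) (α p : ℝ) (O : Set (Euc N)) : ℝ≥0∞ :=
  ⨅ (g : Euc N → ℝ≥0∞) (_ : Measurable g)
    (_ : ∀ x ∈ O, 1 ≤ rieszPot α ⊤ (volume.withDensity g) x),
    ∫⁻ x, g x ^ p

/-- The Bessel kernel of order `α` (up to the normalizing constant `c(N,α)`). -/
def besselKernel (N : ℕ) (α : ℝ) (x : Euc N) : ℝ :=
  ∫ t in Ioi (0 : ℝ),
    Real.exp (-(Real.pi * ‖x‖ ^ 2 / t) - t / (4 * Real.pi)) * t ^ ((α - (N : ℝ)) / 2) / t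

/-- The Bessel capacity `Cap_{G_α,p}`. -/
def besselCap (N : ℕ) (α p : ℝ) (O : Set (Euc N)) : ℝ≥0∞ :=
  ⨅ (g : Euc N → ℝ≥0∞) (_ : Measurable g)
    (_ : ∀ x ∈ O, 1 ≤ ∫⁻ y, ENNReal.ofReal (besselKernel N α (x - y)) * g y),
    ∫⁻ x, g x ^ p

/-- The `R`-truncated fractional maximal function `M^R_γ[μ]`. -/
def fracMax {N : ℕ} (γ : ℝ) (R : ℝ≥0∞) (μ : Measure (Euc N)) (x : Euc N) : ℝ≥0∞ :=
  ⨆ (t : ℝ) (_ : 0 < t) (_ : ENNReal.ofReal t < R),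
    μ (ball x t) / ENNReal.ofReal (t ^ ((N : ℝ) - γ))

/-- The potential `L^R_{α,s}[μ]`. -/
def Lpot {N : ℕ} (α s : ℝ) (R : ℝ≥0∞) (μ : Measure (Euc N)) (x : Euc N) : ℝ≥0∞ :=
  ∫⁻ t in {t : ℝ | 0 < t ∧ ENNReal.ofReal t < R},
    (μ (ball x t) / ENNReal.ofReal (t ^ ((N : ℝ) - α))) ^ s / ENNReal.ofReal t

/-- A mollifier: smooth, nonnegative, supported in the unit ball, of total mass one. -/
def IsMollifier {N : ℕ} (φ : Euc N → ℝ) : Prop :=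
  ContDiff ℝ (⊤ : ℕ∞) φ ∧ (∀ x, 0 ≤ φ x) ∧ tsupport φ ⊆ ball 0 1 ∧ (∫ x, φ x) = 1

/-- The measure with density `φ_n * μ`, where `φ_n(x) = n^N φ(n x)`. -/
def mollified {N : ℕ} (φ : Euc N → ℝ) (n : ℕ) (μ : Measure (Euc N)) : Measure (Euc N) :=
  volume.withDensity fun x =>
    ENNReal.ofReal (∫ y, (n : ℝ) ^ (N : ℕ) * φ ((n : ℝ) • (x - y)) ∂μ)

/-!
Write `B_r` for `B_r(x)` and `V` for the iterated measure with density `(L_{α,s}[ω])^q`. On `B_ρ`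
the inner potential splits at scale `ρ`: radii below `ρ` only see the restriction of `ω` to
`B_{2ρ}`, whose `q`-energy the testing condition bounds by `ω(B_{2ρ})`, while radii above `ρ`
contribute at most the tail `∫_ρ^L ω(B_{2r})^s r^((α-N)s-1) dr`, uniformly on `B_ρ`. Inserting
`V(B_ρ)` into the outer potential, the first part reproduces the potential of `ω` with doubled
balls. The second part is handled by Hardy's inequality, which replaces the tail by `r` times its
integrand; the surplus power of `ω(B_{2r})` is then absorbed by the growth bound
`ω(B_r)^(qs-1) ≲ r^(-((α-N)sq+N))`, which follows from the testing condition because the potential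
of `ω` restricted to `B_r` is at least a constant times `ω(B_r)^s r^((α-N)s)` on `B_r`. Doubling the
balls costs only a constant as long as the balls of radius close to the truncation radius `L` carry
all of `ω`.
-/

/-! ### Powers and Hardy's inequality -/

lemma ofReal_rpow_add {r : ℝ} (hr : 0 < r) (u v : ℝ) :
    ENNReal.ofReal r ^ (u + v) = ENNReal.ofReal r ^ u * ENNReal.ofReal r ^ v :=
  ENNReal.rpow_add u v (ENNReal.ofReal_pos.2 hr).ne' ENNReal.ofReal_ne_top

lemma ofReal_rpow_ne_zero {r : ℝ} (hr : 0 < r) (u : ℝ) : ENNReal.ofReal r ^ u ≠ 0 := by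
  simp [hr]

lemma ofReal_rpow_ne_top {r : ℝ} (hr : 0 < r) (u : ℝ) : ENNReal.ofReal r ^ u ≠ ⊤ := by
  simp [hr]

lemma ofReal_rpow_le_add_of_mem_Icc {a b r : ℝ} (hr : r ∈ Icc a b) (u : ℝ) :
    ENNReal.ofReal r ^ u ≤ ENNReal.ofReal a ^ u + ENNReal.ofReal b ^ u := by
  rcases le_total 0 u with hu | hu
  · exact le_add_left (ENNReal.rpow_le_rpow (ENNReal.ofReal_le_ofReal hr.2) hu)
  · refine le_add_right ?_
    rw [← ENNReal.inv_le_inv, ← ENNReal.rpow_neg, ← ENNReal.rpow_neg]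
    exact ENNReal.rpow_le_rpow (ENNReal.ofReal_le_ofReal hr.1) (neg_nonneg.2 hu)

lemma exists_forall_le_mul_ofReal_rpow {ι : Type*} {f : ι → ℝ → ℝ≥0∞} {B K : ℝ≥0∞} {S T e : ℝ}
    (hS : 0 < S) (hT : 0 < T) (hB : B ≠ ⊤) (hK : K ≠ ⊤) (hfB : ∀ i t, f i t ≤ B)
    (hfK : ∀ i t, 0 < t → t ≤ S → f i t ≤ K * ENNReal.ofReal t ^ e) :
    ∃ K' ≠ ⊤, ∀ i t, 0 < t → t ≤ T → f i t ≤ K' * ENNReal.ofReal t ^ e := by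
  have hST := ENNReal.add_ne_top.2 ⟨ofReal_rpow_ne_top hS (-e), ofReal_rpow_ne_top hT (-e)⟩
  refine ⟨K + B * (ENNReal.ofReal S ^ (-e) + ENNReal.ofReal T ^ (-e)), by finiteness,
    fun i t ht htT => ?_⟩
  rw [add_mul]
  rcases le_total t S with htS | htS
  · exact le_add_right (hfK i t ht htS)
  · refine le_add_left ((hfB i t).trans ?_)
    calc B = B * (ENNReal.ofReal t ^ (-e) * ENNReal.ofReal t ^ e) := by
          rw [← ofReal_rpow_add ht, neg_add_cancel, ENNReal.rpow_zero, mul_one]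
      _ ≤ B * (ENNReal.ofReal S ^ (-e) + ENNReal.ofReal T ^ (-e)) * ENNReal.ofReal t ^ e := by
          rw [mul_assoc]
          gcongr
          exact ofReal_rpow_le_add_of_mem_Icc ⟨htS, htT⟩ _

lemma lintegral_Ioo_ofReal_rpow_ne_zero {a b : ℝ} (ha : 0 ≤ a) (hab : a < b) (u : ℝ) :
    ∫⁻ r in Ioo a b, ENNReal.ofReal r ^ u ≠ 0 := by
  refine ((setLIntegral_pos_iff (by fun_prop)).2 (LT.lt.trans_le ?_ (measure_mono
    (subset_inter (fun r hr => ofReal_rpow_ne_zero (ha.trans_lt hr.1) u) Subset.rfl)))).ne'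
  simpa using hab

lemma lintegral_Ioo_ofReal_rpow_ne_top {a b : ℝ} (ha : 0 < a) (u : ℝ) :
    ∫⁻ r in Ioo a b, ENNReal.ofReal r ^ u ≠ ⊤ := by
  refine ((setLIntegral_mono' measurableSet_Ioo fun r hr =>
    ofReal_rpow_le_add_of_mem_Icc (Ioo_subset_Icc_self hr) u).trans_lt ?_).ne
  rcases le_or_gt b a with hab | hab
  · simp [Ioo_eq_empty_of_le hab]
  · rw [setLIntegral_const, Real.volume_Ioo]
    have := ofReal_rpow_ne_top ha u
    have := ofReal_rpow_ne_top (ha.trans hab) u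
    finiteness

lemma lintegral_Ioo_zero_ofReal_rpow {c r : ℝ} (hc : 0 < c) (hr : 0 < r) :
    ∫⁻ ρ in Ioo 0 r, ENNReal.ofReal ρ ^ (c - 1) =
      ENNReal.ofReal (1 / c) * ENNReal.ofReal r ^ c := by
  have hint : IntegrableOn (fun ρ : ℝ => ρ ^ (c - 1)) (Ioo 0 r) :=
    (intervalIntegral.integrableOn_Ioo_rpow_iff hr).2 (by linarith)
  have hnonneg : ∀ᵐ ρ ∂volume.restrict (Ioo 0 r), 0 ≤ ρ ^ (c - 1) :=
    (ae_restrict_mem measurableSet_Ioo).mono fun ρ hρ => Real.rpow_nonneg hρ.1.le _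
  calc ∫⁻ ρ in Ioo 0 r, ENNReal.ofReal ρ ^ (c - 1)
      = ∫⁻ ρ in Ioo 0 r, ENNReal.ofReal (ρ ^ (c - 1)) :=
        setLIntegral_congr_fun measurableSet_Ioo fun ρ hρ => ENNReal.ofReal_rpow_of_pos hρ.1
    _ = ENNReal.ofReal (∫ ρ in 0..r, ρ ^ (c - 1)) := by
        rw [← ofReal_integral_eq_lintegral_ofReal hint hnonneg, ← integral_Ioc_eq_integral_Ioo,
          ← intervalIntegral.integral_of_le hr.le]
    _ = ENNReal.ofReal (1 / c) * ENNReal.ofReal r ^ c := by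
        rw [integral_rpow (Or.inl (by linarith)), ENNReal.ofReal_rpow_of_pos hr,
          ← ENNReal.ofReal_mul (by positivity), sub_add_cancel, Real.zero_rpow hc.ne', sub_zero,
          one_div_mul_eq_div]

lemma lintegral_Ioi_ofReal_rpow {c ρ : ℝ} (hc : 0 < c) (hρ : 0 < ρ) :
    ∫⁻ r in Ioi ρ, ENNReal.ofReal r ^ (-c - 1) =
      ENNReal.ofReal (1 / c) * ENNReal.ofReal ρ ^ (-c) := by
  have hint : IntegrableOn (fun r : ℝ => r ^ (-c - 1)) (Ioi ρ) :=
    integrableOn_Ioi_rpow_of_lt (by linarith) hρ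
  have hnonneg : ∀ᵐ r ∂volume.restrict (Ioi ρ), 0 ≤ r ^ (-c - 1) :=
    (ae_restrict_mem measurableSet_Ioi).mono fun r hr => Real.rpow_nonneg (hρ.trans hr).le _
  calc ∫⁻ r in Ioi ρ, ENNReal.ofReal r ^ (-c - 1)
      = ∫⁻ r in Ioi ρ, ENNReal.ofReal (r ^ (-c - 1)) :=
        setLIntegral_congr_fun measurableSet_Ioi fun r hr =>
          ENNReal.ofReal_rpow_of_pos (hρ.trans hr)
    _ = ENNReal.ofReal (1 / c) * ENNReal.ofReal ρ ^ (-c) := by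
        rw [← ofReal_integral_eq_lintegral_ofReal hint hnonneg,
          integral_Ioi_rpow_of_lt (by linarith) hρ, ENNReal.ofReal_rpow_of_pos hρ,
          ← ENNReal.ofReal_mul (by positivity), sub_add_cancel, neg_div_neg_eq,
          one_div_mul_eq_div]

lemma lintegral_Ioo_comp_mul_left {c : ℝ} (hc : 0 < c) (f : ℝ → ℝ≥0∞) (a b : ℝ) :
    ∫⁻ r in Ioo (c * a) (c * b), f r = ENNReal.ofReal c * ∫⁻ r in Ioo a b, f (c * r) := by
  rw [← image_mul_left_Ioo hc, lintegral_image_eq_lintegral_abs_deriv_mul measurableSet_Ioo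
    (fun r _ => (hasDerivAt_const_mul c).hasDerivWithinAt) (mul_right_injective₀ hc.ne').injOn,
    lintegral_const_mul' _ _ ENNReal.ofReal_ne_top, abs_of_pos hc]

lemma lintegral_Ioo_mul_rpow_comp_mul_left {c : ℝ} (hc : 0 < c) (f : ℝ → ℝ≥0∞)
    (a b e : ℝ) :
    ∫⁻ r in Ioo (c * a) (c * b), f r * ENNReal.ofReal r ^ (e - 1) =
      ENNReal.ofReal c ^ e * ∫⁻ r in Ioo a b, f (c * r) * ENNReal.ofReal r ^ (e - 1) := by
  rw [lintegral_Ioo_comp_mul_left hc, ← lintegral_const_mul' _ _ ENNReal.ofReal_ne_top,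
    ← lintegral_const_mul' _ _ (ofReal_rpow_ne_top hc e)]
  refine setLIntegral_congr_fun measurableSet_Ioo fun r _ => ?_
  have hpow : ENNReal.ofReal c ^ e = ENNReal.ofReal c * ENNReal.ofReal c ^ (e - 1) := by
    rw [← add_sub_cancel 1 e, ofReal_rpow_add hc, ENNReal.rpow_one, add_sub_cancel]
  rw [ENNReal.ofReal_mul hc.le,
    ENNReal.mul_rpow_of_ne_top ENNReal.ofReal_ne_top ENNReal.ofReal_ne_top, hpow]
  ring

lemma lintegral_Ioi_lintegral_Ioi_swap {f : ℝ → ℝ → ℝ≥0∞} (hf : Measurable (Function.uncurry f))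
    (a : ℝ) :
    ∫⁻ ρ in Ioi a, ∫⁻ r in Ioi ρ, f ρ r = ∫⁻ r in Ioi a, ∫⁻ ρ in Ioo a r, f ρ r := by
  set g : ℝ → ℝ → ℝ≥0∞ := fun ρ r => (Ioi ρ).indicator (f ρ) r
  have hg : Measurable (Function.uncurry g) :=
    hf.indicator (measurableSet_lt measurable_fst measurable_snd)
  calc ∫⁻ ρ in Ioi a, ∫⁻ r in Ioi ρ, f ρ r
      = ∫⁻ ρ in Ioi a, ∫⁻ r in Ioi a, g ρ r := by
        refine setLIntegral_congr_fun measurableSet_Ioi fun ρ hρ => ?_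
        rw [setLIntegral_indicator measurableSet_Ioi,
          inter_eq_left.2 (Ioi_subset_Ioi (le_of_lt hρ))]
    _ = ∫⁻ r in Ioi a, ∫⁻ ρ in Ioi a, g ρ r := lintegral_lintegral_swap hg.aemeasurable
    _ = ∫⁻ r in Ioi a, ∫⁻ ρ in Ioo a r, f ρ r := by
        refine lintegral_congr fun r => ?_
        rw [← Iio_inter_Ioi, ← setLIntegral_indicator measurableSet_Iio]
        rfl

lemma rpow_lintegral_mul_le {X : Type*} [MeasurableSpace X] {μ : Measure X} {k : ℝ} (hk : 1 ≤ k)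
    {w f : X → ℝ≥0∞} (hw : Measurable w) (hf : Measurable f) :
    (∫⁻ x, w x * f x ∂μ) ^ k ≤ (∫⁻ x, w x ∂μ) ^ (k - 1) * ∫⁻ x, w x * f x ^ k ∂μ := by
  have hk0 : 0 < k := one_pos.trans_le hk
  have hLp := eLpNorm'_le_eLpNorm'_mul_rpow_measure_univ (μ := μ.withDensity w) one_pos hk
    hf.aestronglyMeasurable
  simp only [eLpNorm', enorm_eq_self, ENNReal.rpow_one, div_one, withDensity_apply _ .univ,
    Measure.restrict_univ, lintegral_withDensity_eq_lintegral_mul _ hw hf,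
    lintegral_withDensity_eq_lintegral_mul _ hw (hf.pow_const k), Pi.mul_apply] at hLp
  refine (ENNReal.rpow_le_rpow hLp hk0.le).trans_eq ?_
  rw [ENNReal.mul_rpow_of_nonneg _ _ hk0.le, ← ENNReal.rpow_mul, ← ENNReal.rpow_mul,
    one_div_mul_cancel hk0.ne', ENNReal.rpow_one, sub_mul, one_mul, one_div_mul_cancel hk0.ne',
    mul_comm]

lemma rpow_lintegral_Ioi_le {k c ρ : ℝ} (hk : 1 ≤ k) (hc : 0 < c) (hρ : 0 < ρ) {f : ℝ → ℝ≥0∞}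
    (hf : Measurable f) :
    (∫⁻ r in Ioi ρ, f r) ^ k ≤ (ENNReal.ofReal (1 / c) * ENNReal.ofReal ρ ^ (-c)) ^ (k - 1) *
      ∫⁻ r in Ioi ρ, f r ^ k * ENNReal.ofReal r ^ ((c + 1) * (k - 1)) := by
  have hJensen := rpow_lintegral_mul_le (μ := volume.restrict (Ioi ρ)) hk
    (w := fun r => ENNReal.ofReal r ^ (-c - 1)) (f := fun r => f r * ENNReal.ofReal r ^ (c + 1))
    (by fun_prop) (by fun_prop)
  have hleft : ∀ r ∈ Ioi ρ,
      ENNReal.ofReal r ^ (-c - 1) * (f r * ENNReal.ofReal r ^ (c + 1)) = f r := fun r hr => by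
    rw [mul_left_comm, ← ofReal_rpow_add (hρ.trans hr), sub_add_add_cancel, neg_add_cancel,
      ENNReal.rpow_zero, mul_one]
  have hright : ∀ r ∈ Ioi ρ,
      ENNReal.ofReal r ^ (-c - 1) * (f r * ENNReal.ofReal r ^ (c + 1)) ^ k =
        f r ^ k * ENNReal.ofReal r ^ ((c + 1) * (k - 1)) := fun r hr => by
    rw [ENNReal.mul_rpow_of_nonneg _ _ (by linarith), mul_left_comm, ← ENNReal.rpow_mul,
      ← ofReal_rpow_add (hρ.trans hr)]
    ring_nf
  rwa [lintegral_Ioi_ofReal_rpow hc hρ, setLIntegral_congr_fun measurableSet_Ioi hleft,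
    setLIntegral_congr_fun measurableSet_Ioi hright] at hJensen

theorem lintegral_Ioi_rpow_mul_rpow_lintegral_Ioi_le {k b : ℝ} (hk : 1 ≤ k) (hb : 0 < b)
    {f : ℝ → ℝ≥0∞} (hf : Measurable f) :
    ∫⁻ ρ in Ioi 0, ENNReal.ofReal ρ ^ (b - 1) * (∫⁻ r in Ioi ρ, f r) ^ k ≤
      ENNReal.ofReal (k / b) ^ k * ∫⁻ r in Ioi 0, f r ^ k * ENNReal.ofReal r ^ (k + b - 1) := by
  have hk0 : 0 < k := one_pos.trans_le hk
  -- Jensen with the weight `r ^ (-b / k - 1)` is what produces the sharp constant.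
  obtain ⟨c, hc⟩ : ∃ c, c = b / k := ⟨_, rfl⟩
  have hc0 : 0 < c := hc ▸ div_pos hb hk0
  have hbc : b = c * k := by rw [hc, div_mul_cancel₀ _ hk0.ne']
  have hkb : k / b = 1 / c := by rw [hc, one_div_div]
  set A := ENNReal.ofReal (1 / c)
  have hA : A ^ (k - 1) ≠ ⊤ := ofReal_rpow_ne_top (one_div_pos.2 hc0) _
  set G : ℝ → ℝ≥0∞ := fun r => f r ^ k * ENNReal.ofReal r ^ ((c + 1) * (k - 1))
  have hG : Measurable G := by fun_prop
  calc ∫⁻ ρ in Ioi 0, ENNReal.ofReal ρ ^ (b - 1) * (∫⁻ r in Ioi ρ, f r) ^ k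
      ≤ ∫⁻ ρ in Ioi 0, A ^ (k - 1) * ∫⁻ r in Ioi ρ, ENNReal.ofReal ρ ^ (c - 1) * G r := by
        refine setLIntegral_mono' measurableSet_Ioi fun ρ hρ => ?_
        refine (mul_le_mul_right (rpow_lintegral_Ioi_le hk hc0 hρ hf) _).trans_eq ?_
        have hexp : b - 1 + -c * (k - 1) = c - 1 := by rw [hbc]; ring
        rw [ENNReal.mul_rpow_of_nonneg _ _ (by linarith), ← ENNReal.rpow_mul,
          lintegral_const_mul _ hG, ← hexp, ofReal_rpow_add hρ]
        ring
    _ = A ^ (k - 1) * ∫⁻ r in Ioi 0, (∫⁻ ρ in Ioo 0 r, ENNReal.ofReal ρ ^ (c - 1)) * G r := by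
        rw [lintegral_const_mul' _ _ hA, lintegral_Ioi_lintegral_Ioi_swap (by fun_prop)]
        simp_rw [lintegral_mul_const _ (f := fun ρ : ℝ => ENNReal.ofReal ρ ^ (c - 1)) (by fun_prop)]
    _ = A ^ (k - 1) * ∫⁻ r in Ioi 0, A * (f r ^ k * ENNReal.ofReal r ^ (k + b - 1)) := by
        congr 1
        refine setLIntegral_congr_fun measurableSet_Ioi fun r hr => ?_
        have hexp : k + b - 1 = c + (c + 1) * (k - 1) := by rw [hbc]; ring
        rw [lintegral_Ioo_zero_ofReal_rpow hc0 hr, hexp, ofReal_rpow_add hr]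
        ring
    _ = ENNReal.ofReal (k / b) ^ k * ∫⁻ r in Ioi 0, f r ^ k * ENNReal.ofReal r ^ (k + b - 1) := by
        rw [lintegral_const_mul' _ _ ENNReal.ofReal_ne_top, ← mul_assoc, hkb]
        congr 1
        rw [← sub_add_cancel k 1, ofReal_rpow_add (one_div_pos.2 hc0), ENNReal.rpow_one,
          sub_add_cancel]

/-! ### Potentials over doubled balls -/

lemma measurable_measure_ball_mul_rpow_mul_ofReal_rpow {X : Type*} [PseudoMetricSpace X]
    [MeasurableSpace X] (μ : Measure X) (x : X) (c s e : ℝ) :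
    Measurable fun r : ℝ => μ (ball x (c * r)) ^ s * ENNReal.ofReal r ^ e := by
  have hball : Measurable fun r : ℝ => μ (ball x r) :=
    Monotone.measurable fun _ _ h => measure_mono (ball_subset_ball h)
  exact ((hball.comp (measurable_const_mul c)).pow_const s).mul (by fun_prop)

lemma volume_ball_eq_ofReal_rpow_mul {N : ℕ} (x : Euc N) {t : ℝ} (ht : 0 < t) :
    volume (ball x t) = ENNReal.ofReal t ^ (N : ℝ) * volume (ball (0 : Euc N) 1) := by
  rw [Measure.addHaar_ball_of_pos _ _ ht, finrank_euclideanSpace_fin, ENNReal.ofReal_pow ht.le,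
    ENNReal.rpow_natCast]

lemma wolff_eq_Lpot {N : ℕ} (α p : ℝ) (R : ℝ≥0∞) (μ : Measure (Euc N)) :
    wolff α p R μ = Lpot (α * p) (1 / (p - 1)) R μ :=
  rfl

lemma Lpot_ofReal {N : ℕ} (α L : ℝ) {s : ℝ} (hs : 0 ≤ s) (μ : Measure (Euc N)) (x : Euc N) :
    Lpot α s (ENNReal.ofReal L) μ x =
      ∫⁻ r in Ioo 0 L, μ (ball x r) ^ s * ENNReal.ofReal r ^ ((α - N) * s - 1) := by
  have hset : {r : ℝ | 0 < r ∧ ENNReal.ofReal r < ENNReal.ofReal L} = Ioo 0 L := by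
    ext r
    exact and_congr_right fun hr => ENNReal.ofReal_lt_ofReal_iff_of_nonneg hr.le
  rw [Lpot, hset]
  refine setLIntegral_congr_fun measurableSet_Ioo fun r hr => ?_
  have hexp : (α - N) * s - 1 = -((N - α) * s) + -1 := by ring
  simp only [div_eq_mul_inv]
  rw [ENNReal.mul_rpow_of_nonneg _ _ hs, ← ENNReal.ofReal_rpow_of_pos hr.1, ← ENNReal.rpow_neg,
    ← ENNReal.rpow_mul, ← ENNReal.rpow_neg_one (ENNReal.ofReal r), mul_assoc,
    ← ofReal_rpow_add hr.1, hexp, neg_mul]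

/-- The part of the potential `L^L_{α,s}[μ](x)` due to the radii `r > ρ`, with each ball `B_r(x)`
enlarged to `B_{2r}(x)` so that it also controls the same part of the potential at the other
points of `B_ρ(x)`. -/
def doubledLpot {N : ℕ} (α s ρ L : ℝ) (μ : Measure (Euc N)) (x : Euc N) : ℝ≥0∞ :=
  ∫⁻ r in Ioo ρ L, μ (ball x (2 * r)) ^ s * ENNReal.ofReal r ^ ((α - N) * s - 1)

lemma exists_lintegral_Ioo_le_mul_Lpot {N : ℕ} (α : ℝ) {s ρ L : ℝ} (T : ℝ) (hs : 0 ≤ s)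
    (hρ : 0 < ρ) (hL : ρ < L) (μ : Measure (Euc N)) :
    ∃ K ≠ ⊤, ∀ x, μ (ball x ρ)ᶜ = 0 →
      ∫⁻ r in Ioo L T, μ (ball x r) ^ s * ENNReal.ofReal r ^ ((α - N) * s - 1) ≤
        K * Lpot α s (ENNReal.ofReal L) μ x := by
  set e := (α - N) * s
  set I := ∫⁻ r in Ioo ρ L, ENNReal.ofReal r ^ (e - 1)
  set J := ∫⁻ r in Ioo L T, ENNReal.ofReal r ^ (e - 1)
  have hI0 : I ≠ 0 := lintegral_Ioo_ofReal_rpow_ne_zero hρ.le hL _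
  have hI : I ≠ ⊤ := lintegral_Ioo_ofReal_rpow_ne_top hρ _
  have hJ : J ≠ ⊤ := lintegral_Ioo_ofReal_rpow_ne_top (hρ.trans hL) _
  refine ⟨J / I, by finiteness, fun x hx => ?_⟩
  have hfull : ∀ r ∈ Ioo ρ L, μ (ball x r) = μ univ := fun r hr =>
    measure_of_measure_compl_eq_zero
      (measure_mono_null (compl_subset_compl.2 (ball_subset_ball hr.1.le)) hx)
  have hnear : μ univ ^ s * I ≤ Lpot α s (ENNReal.ofReal L) μ x := by
    rw [Lpot_ofReal α L hs, ← lintegral_const_mul _ (by fun_prop)]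
    refine (setLIntegral_mono' measurableSet_Ioo fun r hr => ?_).trans
      (lintegral_mono_set (Ioo_subset_Ioo_left hρ.le))
    rw [← hfull r hr]
  calc _ ≤ ∫⁻ r in Ioo L T, μ univ ^ s * ENNReal.ofReal r ^ (e - 1) :=
        lintegral_mono fun r => mul_le_mul_left
          (ENNReal.rpow_le_rpow (measure_mono (subset_univ _)) hs) _
    _ = J / I * (μ univ ^ s * I) := by
        rw [lintegral_const_mul _ (by fun_prop), mul_left_comm, ENNReal.div_mul_cancel hI0 hI]
    _ ≤ J / I * Lpot α s (ENNReal.ofReal L) μ x := mul_le_mul_right hnear _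

lemma exists_doubledLpot_le_mul_Lpot {N : ℕ} (α : ℝ) {s ρ L : ℝ} (hs : 0 ≤ s) (hρ : 0 < ρ)
    (hL : ρ < L) (μ : Measure (Euc N)) :
    ∃ K ≠ ⊤, ∀ x, μ (ball x ρ)ᶜ = 0 →
      doubledLpot α s 0 L μ x ≤ K * Lpot α s (ENNReal.ofReal L) μ x := by
  set e := (α - N) * s
  obtain ⟨K, hK, hfar⟩ := exists_lintegral_Ioo_le_mul_Lpot α (2 * L) hs hρ hL μ
  have h2 : (ENNReal.ofReal 2 ^ e)⁻¹ ≠ ⊤ := ENNReal.inv_ne_top.2 (ofReal_rpow_ne_zero two_pos e)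
  refine ⟨(ENNReal.ofReal 2 ^ e)⁻¹ * (1 + K), by finiteness, fun x hx => ?_⟩
  set f : ℝ → ℝ≥0∞ := fun r => μ (ball x r) ^ s * ENNReal.ofReal r ^ (e - 1)
  have hscale : ∫⁻ r in Ioo 0 (2 * L), f r = ENNReal.ofReal 2 ^ e * doubledLpot α s 0 L μ x := by
    have := lintegral_Ioo_mul_rpow_comp_mul_left two_pos (fun r => μ (ball x r) ^ s) 0 L e
    rwa [mul_zero] at this
  rw [mul_assoc, ← ENNReal.mul_le_iff_le_inv (ofReal_rpow_ne_zero two_pos e)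
    (ofReal_rpow_ne_top two_pos e), ← hscale]
  calc ∫⁻ r in Ioo 0 (2 * L), f r
      ≤ ∫⁻ r in Ioc 0 L ∪ Ioo L (2 * L), f r := lintegral_mono_set fun r hr =>
        (le_or_gt r L).imp (fun h => ⟨hr.1, h⟩) fun h => ⟨h, hr.2⟩
    _ ≤ (∫⁻ r in Ioo 0 L, f r) + ∫⁻ r in Ioo L (2 * L), f r :=
        (lintegral_union_le _ _ _).trans_eq
          (congrArg (· + _) (setLIntegral_congr Ioo_ae_eq_Ioc.symm))
    _ ≤ (1 + K) * Lpot α s (ENNReal.ofReal L) μ x := by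
        rw [add_mul, one_mul, Lpot_ofReal α L hs]
        exact add_le_add_right (Lpot_ofReal α L hs μ x ▸ hfar x hx) _

lemma le_Lpot_restrict_ball {N : ℕ} (α : ℝ) {s L t : ℝ} (hs : 0 ≤ s) (ht : 0 < t)
    (htL : 3 * t ≤ L) (μ : Measure (Euc N)) {x y : Euc N} (hy : y ∈ ball x t) :
    μ (ball x t) ^ s *
        (ENNReal.ofReal t ^ ((α - N) * s) * ∫⁻ r in Ioo 2 3, ENNReal.ofReal r ^ ((α - N) * s - 1)) ≤
      Lpot α s (ENNReal.ofReal L) (μ.restrict (ball x t)) y := by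
  set m := μ (ball x t)
  have hball : ∀ r ∈ Ioo (t * 2) (t * 3), m ≤ μ.restrict (ball x t) (ball y r) := fun r hr => by
    refine (Measure.restrict_apply_self μ (ball x t)).ge.trans
      (measure_mono (ball_subset_ball' ?_))
    linarith [hr.1, mem_ball'.1 hy]
  calc _ = ∫⁻ r in Ioo (t * 2) (t * 3), m ^ s * ENNReal.ofReal r ^ ((α - N) * s - 1) := by
        rw [lintegral_Ioo_mul_rpow_comp_mul_left ht (fun _ => m ^ s),
          lintegral_const_mul _ (by fun_prop), mul_left_comm]
    _ ≤ ∫⁻ r in Ioo (t * 2) (t * 3),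
          μ.restrict (ball x t) (ball y r) ^ s * ENNReal.ofReal r ^ ((α - N) * s - 1) :=
        setLIntegral_mono' measurableSet_Ioo fun r hr =>
          mul_le_mul_left (ENNReal.rpow_le_rpow (hball r hr) hs) _
    _ ≤ Lpot α s (ENNReal.ofReal L) (μ.restrict (ball x t)) y := by
        rw [Lpot_ofReal α L hs]
        exact lintegral_mono_set (Ioo_subset_Ioo (by positivity) (by linarith))

lemma Lpot_le_add_doubledLpot {N : ℕ} (α : ℝ) {s ρ : ℝ} (L : ℝ) (hs : 0 ≤ s)
    (μ : Measure (Euc N)) {x y : Euc N} (hy : y ∈ ball x ρ) :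
    Lpot α s (ENNReal.ofReal L) μ y ≤
      Lpot α s (ENNReal.ofReal L) (μ.restrict (ball x (2 * ρ))) y + doubledLpot α s ρ L μ x := by
  have hxy : dist y x < ρ := hy
  rw [Lpot_ofReal α L hs, Lpot_ofReal α L hs, ← lintegral_inter_add_sdiff _ _ measurableSet_Iic]
  refine add_le_add ((setLIntegral_mono' (measurableSet_Ioo.inter measurableSet_Iic)
    fun r hr => ?_).trans (lintegral_mono_set inter_subset_left))
    ((setLIntegral_mono' (measurableSet_Ioo.diff measurableSet_Iic) fun r hr => ?_).trans
      (lintegral_mono_set fun r hr => ⟨notMem_Iic.1 hr.2, hr.1.2⟩))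
  · have hsub : ball y r ⊆ ball x (2 * ρ) := ball_subset_ball' (by linarith [hr.2.out])
    rw [Measure.restrict_eq_self _ hsub]
  · have hsub : ball y r ⊆ ball x (2 * r) := ball_subset_ball' (by linarith [notMem_Iic.1 hr.2])
    gcongr

lemma lintegral_rpow_mul_doubledLpot_rpow_le {N : ℕ} (α s L : ℝ) {k b : ℝ} (hk : 1 ≤ k)
    (hb : 0 < b) (μ : Measure (Euc N)) (x : Euc N) :
    ∫⁻ ρ in Ioo 0 L, ENNReal.ofReal ρ ^ (b - 1) * doubledLpot α s ρ L μ x ^ k ≤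
      ENNReal.ofReal (k / b) ^ k * ∫⁻ r in Ioo 0 L,
        μ (ball x (2 * r)) ^ (s * k) * ENNReal.ofReal r ^ ((α - N) * s * k + b - 1) := by
  have hk0 : 0 < k := one_pos.trans_le hk
  set f : ℝ → ℝ≥0∞ := (Iio L).indicator fun r =>
    μ (ball x (2 * r)) ^ s * ENNReal.ofReal r ^ ((α - N) * s - 1)
  have hf : Measurable f :=
    (measurable_measure_ball_mul_rpow_mul_ofReal_rpow μ x 2 s _).indicator measurableSet_Iio
  have htail : ∀ ρ, ∫⁻ r in Ioi ρ, f r = doubledLpot α s ρ L μ x := fun ρ => by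
    rw [setLIntegral_indicator measurableSet_Iio, Iio_inter_Ioi, doubledLpot]
  have hfpow : ∀ r, f r ^ k * ENNReal.ofReal r ^ (k + b - 1) = (Iio L).indicator (fun r =>
      (μ (ball x (2 * r)) ^ s * ENNReal.ofReal r ^ ((α - N) * s - 1)) ^ k *
        ENNReal.ofReal r ^ (k + b - 1)) r := fun r => by
    by_cases hr : r ∈ Iio L <;> simp [f, hr, hk0]
  have hHardy := lintegral_Ioi_rpow_mul_rpow_lintegral_Ioi_le hk hb hf
  simp_rw [htail, hfpow] at hHardy
  rw [setLIntegral_indicator measurableSet_Iio, Iio_inter_Ioi] at hHardy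
  refine (lintegral_mono_set Ioo_subset_Ioi_self).trans (hHardy.trans_eq ?_)
  congr 1
  refine setLIntegral_congr_fun measurableSet_Ioo fun r hr => ?_
  rw [ENNReal.mul_rpow_of_nonneg _ _ hk0.le, ← ENNReal.rpow_mul, ← ENNReal.rpow_mul, mul_assoc,
    ← ofReal_rpow_add hr.1]
  ring_nf

/-! ### The testing condition -/

/-- The testing condition with constant `C`: on each ball, the `q`-energy of the potential of the
restricted measure is at most `C` times the mass of the ball. -/
def LpotTesting {N : ℕ} (α s q : ℝ) (R : ℝ≥0∞) (μ : Measure (Euc N)) (C : ℝ≥0∞) : Prop :=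
  ∀ (x : Euc N) (t : ℝ), 0 < t →
    ∫⁻ y, Lpot α s R (μ.restrict (ball x t)) y ^ q ≤ C * μ (ball x t)

namespace LpotTesting

variable {N : ℕ} {α β s q σ L r : ℝ} {μ : Measure (Euc N)} {C : ℝ≥0∞}

lemma measure_ball_rpow_mul_le (hs : 0 ≤ s) (hq : 0 ≤ q) (hr : 0 < r) (hrL : 3 * r ≤ L)
    (h : LpotTesting α s q (ENNReal.ofReal L) μ C) (x : Euc N) :
    μ (ball x r) ^ (q * s) * ENNReal.ofReal r ^ ((α - N) * s * q + N) *
        ((∫⁻ ρ in Ioo 2 3, ENNReal.ofReal ρ ^ ((α - N) * s - 1)) ^ q *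
          volume (ball (0 : Euc N) 1)) ≤
      C * μ (ball x r) := by
  set c := ∫⁻ ρ in Ioo 2 3, ENNReal.ofReal ρ ^ ((α - N) * s - 1)
  calc _ = ∫⁻ _ in ball x r, (μ (ball x r) ^ s * (ENNReal.ofReal r ^ ((α - N) * s) * c)) ^ q := by
        rw [setLIntegral_const, volume_ball_eq_ofReal_rpow_mul x hr, ofReal_rpow_add hr,
          ENNReal.mul_rpow_of_nonneg _ _ hq, ENNReal.mul_rpow_of_nonneg _ _ hq,
          ← ENNReal.rpow_mul, ← ENNReal.rpow_mul, mul_comm s q]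
        ring
    _ ≤ ∫⁻ y, Lpot α s (ENNReal.ofReal L) (μ.restrict (ball x r)) y ^ q :=
        (setLIntegral_mono' measurableSet_ball fun y hy => ENNReal.rpow_le_rpow
          (le_Lpot_restrict_ball α hs hr hrL μ hy) hq).trans (setLIntegral_le_lintegral _ _)
    _ ≤ C * μ (ball x r) := h x r hr

lemma exists_measure_ball_rpow_le_of_three_mul_le [IsFiniteMeasure μ] (hq : 0 ≤ q) (hqs : 1 < q * s)
    (hC : C ≠ ⊤) (h : LpotTesting α s q (ENNReal.ofReal L) μ C) :
    ∃ K ≠ ⊤, ∀ x t, 0 < t → 3 * t ≤ L →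
      μ (ball x t) ^ (q * s - 1) ≤ K * ENNReal.ofReal t ^ (-((α - N) * s * q + N)) := by
  have hs : 0 < s := pos_of_mul_pos_right (one_pos.trans hqs) hq
  set e := (α - N) * s
  set c := ∫⁻ r in Ioo 2 3, ENNReal.ofReal r ^ (e - 1)
  set V := volume (ball (0 : Euc N) 1)
  have hc0 : c ≠ 0 := lintegral_Ioo_ofReal_rpow_ne_zero (by norm_num) (by norm_num) _
  have hc : c ≠ ⊤ := lintegral_Ioo_ofReal_rpow_ne_top (by norm_num) _
  have hV0 : V ≠ 0 := (measure_ball_pos _ _ one_pos).ne'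
  have hV : V ≠ ⊤ := measure_ball_lt_top.ne
  have hD0 : c ^ q * V ≠ 0 := by simp [hc0, hc, hV0]
  have hD : c ^ q * V ≠ ⊤ := by finiteness
  refine ⟨C / (c ^ q * V), ENNReal.div_ne_top hC hD0, fun x t ht htL => ?_⟩
  set m := μ (ball x t)
  have hm : m ≠ ⊤ := by finiteness
  rcases eq_or_ne m 0 with hm0 | hm0
  · simp [hm0, ENNReal.zero_rpow_of_pos (sub_pos.2 hqs)]
  have hpow : m ^ (q * s) = m ^ (q * s - 1) * m := by
    rw [ENNReal.rpow_sub _ _ hm0 hm, ENNReal.rpow_one, ENNReal.div_mul_cancel hm0 hm]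
  have htest := h.measure_ball_rpow_mul_le hs.le hq ht htL x
  have hcancel : m ^ (q * s - 1) * ENNReal.ofReal t ^ (e * q + N) * (c ^ q * V) ≤ C := by
    rw [← ENNReal.mul_le_mul_iff_left hm0 hm]
    refine le_of_eq_of_le ?_ htest
    rw [hpow]
    ring
  rw [ENNReal.rpow_neg, ← div_eq_mul_inv, ENNReal.le_div_iff_mul_le
    (Or.inl (ofReal_rpow_ne_zero ht _)) (Or.inl (ofReal_rpow_ne_top ht _)),
    ENNReal.le_div_iff_mul_le (Or.inl hD0) (Or.inl hD)]
  exact hcancel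

lemma exists_measure_ball_two_mul_rpow_le [IsFiniteMeasure μ] (hq : 0 ≤ q) (hqs : 1 < q * s)
    (hL : 0 < L) (hC : C ≠ ⊤) (h : LpotTesting α s q (ENNReal.ofReal L) μ C) :
    ∃ K ≠ ⊤, ∀ x r, 0 < r → r ≤ L →
      μ (ball x (2 * r)) ^ (q * s - 1) ≤ K * ENNReal.ofReal r ^ (-((α - N) * s * q + N)) := by
  obtain ⟨K, hK, hsmall⟩ := h.exists_measure_ball_rpow_le_of_three_mul_le hq hqs hC
  set γ := -((α - N) * s * q + N)
  have hqs0 : 0 ≤ q * s - 1 := by linarith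
  refine exists_forall_le_mul_ofReal_rpow (S := L / 6) (by positivity) hL
    (ENNReal.rpow_ne_top_of_nonneg hqs0 (measure_ne_top μ univ))
    (ENNReal.mul_ne_top hK (ofReal_rpow_ne_top two_pos γ))
    (fun x r => ENNReal.rpow_le_rpow (measure_mono (subset_univ _)) hqs0) fun x r hr hrL => ?_
  refine (hsmall x (2 * r) (by positivity) (by linarith)).trans_eq ?_
  rw [ENNReal.ofReal_mul two_pos.le,
    ENNReal.mul_rpow_of_ne_top ENNReal.ofReal_ne_top ENNReal.ofReal_ne_top, mul_assoc]

lemma exists_lintegral_rpow_mul_doubledLpot_rpow_le [IsFiniteMeasure μ] (hβ : 0 < β)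
    (hq : 0 ≤ q) (hqs : 1 < q * s) (hqσ : 1 ≤ q * σ) (hL : 0 < L) (hC : C ≠ ⊤)
    (h : LpotTesting α s q (ENNReal.ofReal L) μ C) :
    ∃ K ≠ ⊤, ∀ x,
      ∫⁻ ρ in Ioo 0 L, ENNReal.ofReal ρ ^ (β * σ - 1) * doubledLpot α s ρ L μ x ^ (q * σ) ≤
        K * doubledLpot β σ 0 L μ x := by
  have hσ : 0 < σ := pos_of_mul_pos_right (one_pos.trans_le hqσ) hq
  obtain ⟨K, hK, hgrowth⟩ := h.exists_measure_ball_two_mul_rpow_le hq hqs hL hC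
  have hKσ : K ^ σ ≠ ⊤ := ENNReal.rpow_ne_top_of_nonneg hσ.le hK
  refine ⟨ENNReal.ofReal (q * σ / (β * σ)) ^ (q * σ) * K ^ σ, ?_, fun x =>
    (lintegral_rpow_mul_doubledLpot_rpow_le α s L hqσ (by positivity) μ x).trans ?_⟩
  · exact ENNReal.mul_ne_top (ENNReal.rpow_ne_top_of_nonneg (by positivity)
      ENNReal.ofReal_ne_top) hKσ
  rw [mul_assoc (_ ^ _), doubledLpot, ← lintegral_const_mul' _ _ hKσ]
  refine mul_le_mul_right (setLIntegral_mono' measurableSet_Ioo fun r hr => ?_) _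
  set m := μ (ball x (2 * r))
  set γ := -((α - N) * s * q + N)
  have hmass : m ^ (s * (q * σ)) ≤ m ^ σ * (K ^ σ * ENNReal.ofReal r ^ (γ * σ)) :=
    calc m ^ (s * (q * σ)) = m ^ σ * (m ^ (q * s - 1)) ^ σ := by
          rw [← ENNReal.rpow_mul, ← ENNReal.rpow_add_of_nonneg _ _ hσ.le
            (mul_nonneg (by linarith) hσ.le)]
          ring_nf
      _ ≤ m ^ σ * (K * ENNReal.ofReal r ^ γ) ^ σ := by
          gcongr
          exact hgrowth x r hr.1 hr.2.le
      _ = m ^ σ * (K ^ σ * ENNReal.ofReal r ^ (γ * σ)) := by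
          rw [ENNReal.mul_rpow_of_nonneg _ _ hσ.le, ENNReal.rpow_mul]
  have hexp : (β - N) * σ - 1 = γ * σ + ((α - N) * s * (q * σ) + β * σ - 1) := by ring
  rw [hexp, ofReal_rpow_add hr.1]
  exact (mul_le_mul_left hmass _).trans_eq (by ring)

lemma setLIntegral_Lpot_rpow_le (hs : 0 ≤ s) (hq : 0 ≤ q) (hr : 0 < r)
    (h : LpotTesting α s q (ENNReal.ofReal L) μ C) (x : Euc N) :
    ∫⁻ y in ball x r, Lpot α s (ENNReal.ofReal L) μ y ^ q ≤
      2 ^ q * (C * μ (ball x (2 * r)) + ENNReal.ofReal r ^ (N : ℝ) * volume (ball (0 : Euc N) 1) *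
        doubledLpot α s r L μ x ^ q) := by
  set D := doubledLpot α s r L μ x
  set P := Lpot α s (ENNReal.ofReal L) (μ.restrict (ball x (2 * r)))
  calc ∫⁻ y in ball x r, Lpot α s (ENNReal.ofReal L) μ y ^ q
      ≤ ∫⁻ y in ball x r, 2 ^ q * (P y ^ q + D ^ q) :=
        setLIntegral_mono' measurableSet_ball fun y hy =>
          (ENNReal.rpow_le_rpow (Lpot_le_add_doubledLpot α L hs μ hy) hq).trans
            (ENNReal.add_rpow_le_two_rpow_mul_rpow_add_rpow _ _ hq)
    _ = 2 ^ q * ((∫⁻ y in ball x r, P y ^ q) + D ^ q * volume (ball x r)) := by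
        rw [lintegral_const_mul' _ _ (by finiteness), lintegral_add_right _ measurable_const,
          setLIntegral_const]
    _ ≤ _ := by
        rw [volume_ball_eq_ofReal_rpow_mul x hr, mul_comm (D ^ q)]
        gcongr
        exact (setLIntegral_le_lintegral _ _).trans (h x (2 * r) (by positivity))

lemma withDensity_ball_rpow_mul_le (β : ℝ) (hs : 0 ≤ s) (hq : 0 ≤ q) (hσ : 0 ≤ σ) (hr : 0 < r)
    (h : LpotTesting α s q (ENNReal.ofReal L) μ C) (x : Euc N) :
    (volume.withDensity fun y => Lpot α s (ENNReal.ofReal L) μ y ^ q) (ball x r) ^ σ *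
        ENNReal.ofReal r ^ ((β - N) * σ - 1) ≤
      2 ^ (q * σ + σ) * (C ^ σ *
          (μ (ball x (2 * r)) ^ σ * ENNReal.ofReal r ^ ((β - N) * σ - 1)) +
        volume (ball (0 : Euc N) 1) ^ σ *
          (ENNReal.ofReal r ^ (β * σ - 1) * doubledLpot α s r L μ x ^ (q * σ))) := by
  set V := volume (ball (0 : Euc N) 1)
  set D := doubledLpot α s r L μ x
  set m := μ (ball x (2 * r))
  have hexp : β * σ - 1 = N * σ + ((β - N) * σ - 1) := by ring
  rw [withDensity_apply _ measurableSet_ball]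
  calc _ ≤ (2 ^ q * (C * m + ENNReal.ofReal r ^ (N : ℝ) * V * D ^ q)) ^ σ *
          ENNReal.ofReal r ^ ((β - N) * σ - 1) := by
        gcongr
        exact h.setLIntegral_Lpot_rpow_le hs hq hr x
    _ ≤ 2 ^ (q * σ) * (2 ^ σ * ((C * m) ^ σ + (ENNReal.ofReal r ^ (N : ℝ) * V * D ^ q) ^ σ)) *
          ENNReal.ofReal r ^ ((β - N) * σ - 1) := by
        rw [ENNReal.mul_rpow_of_nonneg _ _ hσ, ← ENNReal.rpow_mul]
        gcongr
        exact ENNReal.add_rpow_le_two_rpow_mul_rpow_add_rpow _ _ hσ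
    _ = _ := by
        rw [ENNReal.mul_rpow_of_nonneg _ _ hσ, ENNReal.mul_rpow_of_nonneg _ _ hσ,
          ENNReal.mul_rpow_of_nonneg _ _ hσ, ← ENNReal.rpow_mul, ← ENNReal.rpow_mul, hexp,
          ofReal_rpow_add hr, ENNReal.rpow_add _ _ two_ne_zero ENNReal.ofNat_ne_top]
        ring

lemma exists_Lpot_withDensity_le_mul_doubledLpot [IsFiniteMeasure μ] (hβ : 0 < β)
    (hq : 0 ≤ q) (hqs : 1 < q * s) (hqσ : 1 ≤ q * σ) (hL : 0 < L) (hC : C ≠ ⊤)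
    (h : LpotTesting α s q (ENNReal.ofReal L) μ C) :
    ∃ K ≠ ⊤, ∀ x, Lpot β σ (ENNReal.ofReal L)
        (volume.withDensity fun y => Lpot α s (ENNReal.ofReal L) μ y ^ q) x ≤
      K * doubledLpot β σ 0 L μ x := by
  have hs : 0 < s := pos_of_mul_pos_right (one_pos.trans hqs) hq
  have hσ : 0 < σ := pos_of_mul_pos_right (one_pos.trans_le hqσ) hq
  obtain ⟨T, hT, htail⟩ :=
    h.exists_lintegral_rpow_mul_doubledLpot_rpow_le hβ hq hqs hqσ hL hC
  set V := volume (ball (0 : Euc N) 1)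
  have hV : V ≠ ⊤ := measure_ball_lt_top.ne
  have h2 : (2 : ℝ≥0∞) ^ (q * σ + σ) ≠ ⊤ := by finiteness
  have hCσ : C ^ σ ≠ ⊤ := by finiteness
  have hVσ : V ^ σ ≠ ⊤ := by finiteness
  refine ⟨2 ^ (q * σ + σ) * (C ^ σ + V ^ σ * T), by finiteness, fun x => ?_⟩
  rw [Lpot_ofReal β L hσ.le]
  refine (setLIntegral_mono' measurableSet_Ioo fun r hr =>
    h.withDensity_ball_rpow_mul_le β hs.le hq hσ.le hr.1 x).trans ?_
  rw [lintegral_const_mul' _ _ h2, lintegral_add_left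
    ((measurable_measure_ball_mul_rpow_mul_ofReal_rpow μ x 2 σ _).const_mul _),
    lintegral_const_mul' _ _ hCσ, lintegral_const_mul' _ _ hVσ, mul_assoc, add_mul, mul_assoc]
  exact mul_le_mul_right (add_le_add_right (mul_le_mul_right (htail x) _) _) _

end LpotTesting

theorem stmt8_general {N : ℕ} {α β s σ q L ρ : ℝ} (hβ : 0 < β) (hq : 0 ≤ q) (hqs : 1 < q * s)
    (hqσ : 1 ≤ q * σ) (hρ : 0 < ρ) (hL : ρ < L) (μ : Measure (Euc N)) [IsFiniteMeasure μ]
    {C : ℝ≥0∞} (hC : C ≠ ⊤) (h : LpotTesting α s q (ENNReal.ofReal L) μ C) :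
    ∃ C2 > 0, ∀ x, μ (ball x ρ)ᶜ = 0 →
      Lpot β σ (ENNReal.ofReal L)
          (volume.withDensity fun y => Lpot α s (ENNReal.ofReal L) μ y ^ q) x ≤
        ENNReal.ofReal C2 * Lpot β σ (ENNReal.ofReal L) μ x := by
  have hσ : 0 < σ := pos_of_mul_pos_right (one_pos.trans_le hqσ) hq
  obtain ⟨K, hK, hiter⟩ := h.exists_Lpot_withDensity_le_mul_doubledLpot hβ hq hqs hqσ
    (hρ.trans hL) hC
  obtain ⟨K', hK', hdoubling⟩ := exists_doubledLpot_le_mul_Lpot β hσ.le hρ hL μ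
  refine ⟨(K * K').toReal + 1, by positivity, fun x hx => (hiter x).trans ?_⟩
  have hle : K * K' ≤ ENNReal.ofReal ((K * K').toReal + 1) :=
    (ENNReal.le_ofReal_iff_toReal_le (by finiteness) (by positivity)).2 (by linarith)
  calc K * doubledLpot β σ 0 L μ x
      ≤ K * (K' * Lpot β σ (ENNReal.ofReal L) μ x) := mul_le_mul_right (hdoubling x hx) _
    _ ≤ _ := by
      rw [← mul_assoc]
      gcongr

/-- Truncated pointwise iterated Wolff potential estimate for a
bounded measure supported in a ball. -/
theorem stmt8 (N : ℕ) (α β p q R : ℝ) (hα : 0 < α) (hp : 1 < p) (hpN : p < (N : ℝ) / α)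
    (hβ : 0 < β) (hβN : β < (N : ℝ) / p) (hq : p - 1 < q) (hR : 0 < R) (x0 : Euc N)
    (ω : Measure (Euc N)) [IsFiniteMeasure ω] (hsupp : ω (ball x0 R)ᶜ = 0)
    (h : ∃ C > 0, ∀ (x : Euc N) (t : ℝ), 0 < t →
      (∫⁻ y, (wolff α p (ENNReal.ofReal (4 * R)) (ω.restrict (ball x t)) y) ^ q) ≤
        ENNReal.ofReal C * ω (ball x t)) :
    ∃ C2 > 0, ∀ᵐ x ∂(volume.restrict (ball x0 (2 * R))),
      wolff β p (ENNReal.ofReal (4 * R))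
          (volume.withDensity fun y => (wolff α p (ENNReal.ofReal (4 * R)) ω y) ^ q) x ≤
        ENNReal.ofReal C2 * wolff β p (ENNReal.ofReal (4 * R)) ω x := by
  obtain ⟨C, -, hC⟩ := h
  simp only [wolff_eq_Lpot] at hC ⊢
  have hp1 : 0 < p - 1 := sub_pos.2 hp
  have hqs : 1 < q * (1 / (p - 1)) := by rwa [mul_one_div, one_lt_div hp1]
  obtain ⟨C2, hC2, hle⟩ := stmt8_general (ρ := 3 * R) (β := β * p) (mul_pos hβ (one_pos.trans hp))
    (hp1.trans hq).le hqs hqs.le (by linarith) (by linarith) ω ENNReal.ofReal_ne_top hC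
  refine ⟨C2, hC2, (ae_restrict_mem measurableSet_ball).mono fun x hx =>
    hle x (measure_mono_null (compl_subset_compl.2 (ball_subset_ball' ?_)) hsupp)⟩
  linarith [mem_ball'.1 hx]
end
end

section
/- Let α,β,q1,q2>0 with α>β, 1<p<N/α, q1+q2>p−1, q2<N(p−1)/(N−βp), and (αpq1+βpq2)/(q1+q2)<N. Set γ=(αq1+βq2)/(q1+q2). Then there exist constants, depending only on N,α,β,p,q1,q2, such that for every nonnegative Radon measure μ on ℝ^N the three quantities ∫_{ℝ^N} (M_{γp}[μ](x))^{(q1+q2)/(p−1)} dx, ∫_{ℝ^N} (W_{γ,p}[μ](x))^{q1+q2} dx, and ∫_{ℝ^N} (W_{α,p}[μ](x))^{q1}(W_{β,p}[μ](x))^{q2} dx are pairwise comparable (each is bounded above by a constant times each other). -/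
open MeasureTheory Metric Set Filter Bornology
open scoped ENNReal NNReal Topology RealInnerProductSpace

noncomputable section

/-!
Up to constants, `wolff α p ⊤ μ x` is the sum over dyadic scales `ℓ` of
`(μ(Q) / ℓ ^ (N - α * p)) ^ (1 / (p - 1))`, where `Q` is the dyadic neighbourhood of `x` at scale
`ℓ`. At a single scale the terms of orders `α` and `β`, raised to the powers `q₁` and `q₂`, multiply
to the corresponding power of the term of the intermediate order `γ`. As each Wolff potential bounds
each of its terms, the maximal function is bounded pointwise by the product of the potentials.

For the converse in the mean, write `A n` and `B n` for the sums of the `n` coarsest terms of the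
two orders. Given the coarser scales, the finer terms decay geometrically in the mean (this is where
the bound on `q₂` enters), so summation by parts reduces `P = ∫ A ^ q₁ * B ^ q₂` to integrals of
increments of `A ^ (q₁ - θ) * B ^ q₂` against the `θ`-th power of the current term `a n`. Either
`a n ≤ ε * A (n + 1)`, or `a n` carries the whole sum and the power `M` of the maximal function
takes over. Hence `P ≤ C * (ε ^ θ * P + ε ^ (-(q₁ + q₂)) * ∫ M)`, and for small `ε` the first term
is absorbed. The single potential of order `γ` is the case of equal orders, with its exponent split
in two.
-/

section PartialSums

lemma sum_range_succ_tsub {G : Type*} [AddCommMonoid G] [PartialOrder G] [CanonicallyOrderedAdd G]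
    [AddLeftMono G] [Sub G] [OrderedSub G] {u : ℕ → G} (hu : Monotone u) (hu0 : u 0 = 0) (n : ℕ) :
    ∑ m ∈ Finset.range n, (u (m + 1) - u m) = u n := by
  induction n with
  | zero => simp [hu0]
  | succ n ih => rw [Finset.sum_range_succ, ih, add_tsub_cancel_of_le (hu n.le_succ)]

lemma monotone_sum_range {G : Type*} [AddCommMonoid G] [PartialOrder G] [CanonicallyOrderedAdd G]
    [AddLeftMono G] (a : ℕ → G) : Monotone fun n => ∑ m ∈ Finset.range n, a m :=
  fun _ _ h => Finset.sum_le_sum_of_subset (Finset.range_mono h)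

/- If the alternative `Y * Z ≤ M` holds at some index, every earlier summand is absorbed in `M`. -/
lemma sum_range_tsub_mul_le {Y Z x : ℕ → ℝ≥0∞} (hY : Monotone Y) (hZ : Monotone Z) (hZ0 : Z 0 = 0)
    (hx : ∀ n, x n ≤ Y (n + 1)) {c M : ℝ≥0∞} {L : ℕ}
    (h : ∀ n < L, x n ≤ c * Y (n + 1) ∨ Y (n + 1) * Z (n + 1) ≤ M) :
    ∑ n ∈ Finset.range L, (Z (n + 1) - Z n) * x n ≤ c * (Y L * Z L) + M := by
  induction L with
  | zero => simp
  | succ L ih =>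
    rcases h L L.lt_succ_self with hL | hL
    · have hstep : Z L + (Z (L + 1) - Z L) = Z (L + 1) := add_tsub_cancel_of_le (hZ L.le_succ)
      calc ∑ n ∈ Finset.range (L + 1), (Z (n + 1) - Z n) * x n
          ≤ c * (Y (L + 1) * Z L) + M + (Z (L + 1) - Z L) * (c * Y (L + 1)) := by
            rw [Finset.sum_range_succ]
            gcongr
            refine (ih fun n hn => h n (hn.trans L.lt_succ_self)).trans ?_
            gcongr
            exact hY L.le_succ
        _ = c * (Y (L + 1) * (Z L + (Z (L + 1) - Z L))) + M := by ring
        _ = c * (Y (L + 1) * Z (L + 1)) + M := by rw [hstep]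
    · calc ∑ n ∈ Finset.range (L + 1), (Z (n + 1) - Z n) * x n
          ≤ ∑ n ∈ Finset.range (L + 1), (Z (n + 1) - Z n) * Y (L + 1) := by
            gcongr with n hn
            exact (hx n).trans (hY (Finset.mem_range.1 hn))
        _ = Y (L + 1) * Z (L + 1) := by
            rw [← Finset.sum_mul, sum_range_succ_tsub hZ hZ0, mul_comm]
        _ ≤ c * (Y (L + 1) * Z (L + 1)) + M := hL.trans le_add_self

end PartialSums

section Powers

lemma one_sub_one_sub_rpow_le {t q : ℝ} (ht0 : 0 ≤ t) (ht1 : t ≤ 1) (hq : 0 ≤ q) :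
    1 - (1 - t) ^ q ≤ max 1 q * t := by
  rcases le_total 1 q with h | h
  · have := one_add_mul_self_le_rpow_one_add (s := -t) (by linarith) h
    rw [max_eq_right h]
    rw [← sub_eq_add_neg] at this
    linarith
  · have := Real.rpow_le_rpow_of_exponent_ge' (by linarith : 0 ≤ 1 - t) (by linarith) hq h
    rw [Real.rpow_one] at this
    rw [max_eq_left h]
    linarith

lemma rpow_sub_rpow_le {x y q θ : ℝ} (hx : 0 ≤ x) (hxy : x ≤ y) (hθ : 0 < θ) (hθ1 : θ ≤ 1)
    (hq : θ < q) : y ^ q - x ^ q ≤ max 1 q * ((y - x) ^ θ * y ^ (q - θ)) := by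
  rcases (hx.trans hxy).eq_or_lt with rfl | hy
  · obtain rfl : x = 0 := le_antisymm hxy hx
    simp [Real.zero_rpow hθ.ne']
  obtain ⟨t, ht⟩ : ∃ t, t = 1 - x / y := ⟨_, rfl⟩
  have ht0 : 0 ≤ t := by rw [ht, sub_nonneg]; exact (div_le_one hy).2 hxy
  have ht1 : t ≤ 1 := by rw [ht]; linarith [div_nonneg hx hy.le]
  have hxt : x = (1 - t) * y := by rw [ht]; field_simp; ring
  have htθ : t ≤ t ^ θ := by simpa using Real.rpow_le_rpow_of_exponent_ge' ht0 ht1 hθ.le hθ1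
  calc y ^ q - x ^ q = (1 - (1 - t) ^ q) * y ^ q := by
        rw [hxt, Real.mul_rpow (by linarith) hy.le]; ring
    _ ≤ max 1 q * t ^ θ * y ^ q := by
        gcongr
        exact (one_sub_one_sub_rpow_le ht0 ht1 (hθ.trans hq).le).trans (by gcongr)
    _ = max 1 q * ((y - x) ^ θ * y ^ (q - θ)) := by
        rw [hxt, show y - (1 - t) * y = t * y by ring, Real.mul_rpow ht0 hy.le, mul_assoc,
          mul_assoc, ← Real.rpow_add hy, add_sub_cancel]

lemma ennreal_add_rpow_tsub_rpow_le (x a : ℝ≥0∞) {q θ : ℝ} (hθ : 0 < θ) (hθ1 : θ ≤ 1)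
    (hq : θ < q) :
    (x + a) ^ q - x ^ q ≤ ENNReal.ofReal (max 1 q) * (a ^ θ * (x + a) ^ (q - θ)) := by
  have hq0 : 0 < q := hθ.trans hq
  have hqθ : 0 < q - θ := sub_pos.2 hq
  induction x with
  | top => simp [hq0]
  | coe x =>
    induction a with
    | top => simp [hθ, hqθ]
    | coe a =>
      have h := rpow_sub_rpow_le x.coe_nonneg (le_add_of_nonneg_right a.coe_nonneg) hθ hθ1 hq
      rw [add_sub_cancel_left] at h
      rw [← ENNReal.coe_add, ← ENNReal.coe_rpow_of_nonneg _ hq0.le,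
        ← ENNReal.coe_rpow_of_nonneg _ hq0.le, ← ENNReal.coe_rpow_of_nonneg _ hθ.le,
        ← ENNReal.coe_rpow_of_nonneg _ hqθ.le, ← ENNReal.coe_sub, ← ENNReal.coe_mul,
        ENNReal.ofReal, ← ENNReal.coe_mul, ENNReal.coe_le_coe, tsub_le_iff_left,
        ← NNReal.coe_le_coe]
      push_cast
      rw [Real.coe_toNNReal _ (by positivity)]
      linarith

lemma ennreal_rpow_sub_one_mul_le (y : ℝ≥0∞) {t : ℝ} (ht : 0 < t) : y ^ (t - 1) * y ≤ y ^ t := by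
  rcases eq_or_ne y 0 with rfl | h0
  · simp
  rcases eq_or_ne y ⊤ with rfl | htop
  · simp [ht]
  · rw [ENNReal.rpow_sub _ _ h0 htop, ENNReal.rpow_one, ENNReal.div_mul_cancel h0 htop]

lemma ennreal_rpow_le_mul_rpow_sub_one_add (x y : ℝ≥0∞) {t : ℝ} (ht : 0 < t) (ht1 : t ≤ 1) :
    x ^ t ≤ x * y ^ (t - 1) + y ^ t := by
  rcases le_total x y with h | h
  · exact (ENNReal.rpow_le_rpow h ht.le).trans le_add_self
  rcases eq_or_ne x 0 with rfl | h0
  · simp [ht]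
  rcases eq_or_ne y ⊤ with rfl | htop
  · simp [ht]
  have h1t : 0 ≤ 1 - t := sub_nonneg.2 ht1
  have hxy : x ^ t * y ^ (1 - t) ≤ x := calc
    x ^ t * y ^ (1 - t) ≤ x ^ t * x ^ (1 - t) := by gcongr
    _ = x := by rw [← ENNReal.rpow_add_of_nonneg _ _ ht.le h1t, add_sub_cancel, ENNReal.rpow_one]
  refine le_trans ?_ le_self_add
  rw [← neg_sub, ENNReal.rpow_neg, ← div_eq_mul_inv]
  exact (ENNReal.le_div_iff_mul_le (.inr h0)
    (.inl (ENNReal.rpow_ne_top_of_nonneg h1t htop))).2 hxy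

end Powers

section Geometric

lemma ennreal_two_rpow_add (a b : ℝ) : (2 : ℝ≥0∞) ^ (a + b) = 2 ^ a * 2 ^ b :=
  ENNReal.rpow_add a b two_ne_zero ENNReal.ofNat_ne_top

lemma ennreal_tsum_two_rpow_neg_ne_top {δ : ℝ} (hδ : 0 < δ) :
    ∑' n : ℕ, (2 : ℝ≥0∞) ^ (-(n * δ)) ≠ ⊤ := by
  have hpow (n : ℕ) : (2 : ℝ≥0∞) ^ (-(n * δ)) = (2 ^ (-δ)) ^ n := by
    rw [← ENNReal.rpow_natCast, ← ENNReal.rpow_mul]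
    ring_nf
  have hlt : (2 : ℝ≥0∞) ^ (-δ) < 1 :=
    ENNReal.rpow_lt_one_of_one_lt_of_neg ENNReal.one_lt_two (neg_lt_zero.2 hδ)
  simp only [hpow, ENNReal.tsum_geometric]
  exact ENNReal.inv_ne_top.2 (tsub_pos_iff_lt.2 hlt).ne'

lemma ennreal_tsum_rpow_le (c : ℕ → ℝ≥0∞) {r δ : ℝ} (hr : 0 < r) :
    (∑' n, c n) ^ r ≤
      (∑' n : ℕ, (2 : ℝ≥0∞) ^ (-(n * (δ / r)))) ^ r * ∑' n : ℕ, 2 ^ (n * δ) * c n ^ r := by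
  set S : ℝ≥0∞ := ∑' n : ℕ, 2 ^ (n * δ) * c n ^ r
  have hterm (n : ℕ) : c n ≤ 2 ^ (-(n * (δ / r))) * S ^ r⁻¹ := by
    have hmem : (2 : ℝ≥0∞) ^ (n * δ) * c n ^ r ≤ S :=
      ENNReal.le_tsum (f := fun n : ℕ => (2 : ℝ≥0∞) ^ (n * δ) * c n ^ r) n
    calc c n = 2 ^ (-(n * (δ / r))) * (2 ^ (n * δ) * c n ^ r) ^ r⁻¹ := by
          rw [ENNReal.mul_rpow_of_nonneg _ _ (inv_nonneg.2 hr.le), ENNReal.rpow_rpow_inv hr.ne',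
            ← ENNReal.rpow_mul, ← mul_assoc, ← ennreal_two_rpow_add]
          ring_nf
          simp
      _ ≤ _ := by gcongr
  calc (∑' n, c n) ^ r ≤ ((∑' n : ℕ, (2 : ℝ≥0∞) ^ (-(n * (δ / r)))) * S ^ r⁻¹) ^ r := by
        rw [← ENNReal.tsum_mul_right]
        gcongr with n
        exact hterm n
    _ = _ := by rw [ENNReal.mul_rpow_of_nonneg _ _ hr.le, ENNReal.rpow_inv_rpow hr.ne']

end Geometric

section Absorption

lemma exists_mul_rpow_le_half {C : ℝ≥0∞} (hC : C ≠ ⊤) {θ : ℝ} (hθ : 0 < θ) :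
    ∃ ε : ℝ≥0∞, ε ≠ 0 ∧ ε ≠ ⊤ ∧ C * ε ^ θ ≤ 2⁻¹ := by
  refine ⟨((2 * (C + 1))⁻¹) ^ θ⁻¹, ?_, ?_, ?_⟩
  · have : 2 * (C + 1) ≠ ⊤ := by finiteness
    simp [ENNReal.rpow_eq_zero_iff, this]
  · exact ENNReal.rpow_ne_top_of_nonneg (inv_nonneg.2 hθ.le) (by simp)
  · rw [ENNReal.rpow_inv_rpow hθ.ne', ← div_eq_mul_inv]
    refine ENNReal.div_le_of_le_mul ?_
    rw [← mul_assoc, ENNReal.inv_mul_cancel (by simp) (by simp), one_mul]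
    exact le_self_add

lemma ennreal_le_two_mul_of_le_half_mul_add {P x : ℝ≥0∞} (hP : P ≠ ⊤) (h : P ≤ 2⁻¹ * P + x) :
    P ≤ 2 * x := by
  have hsum : P + P ≤ P + 2 * x := calc
    P + P = 2 * P := (two_mul P).symm
    _ ≤ 2 * (2⁻¹ * P + x) := by gcongr
    _ = P + 2 * x := by
      rw [mul_add, ← mul_assoc, ENNReal.mul_inv_cancel (by simp) (by simp), one_mul]
  exact (ENNReal.add_le_add_iff_left hP).1 hsum

lemma exists_forall_le_mul_of_forall_le_rpow_mul_add {C : ℝ≥0∞} (hC : C ≠ ⊤) {θ q : ℝ}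
    (hθ : 0 < θ) (hq : 0 ≤ q) :
    ∃ C' ≠ (⊤ : ℝ≥0∞), ∀ P m : ℝ≥0∞, P ≠ ⊤ →
      (∀ ε : ℝ≥0∞, ε ≠ 0 → ε ≠ ⊤ → P ≤ C * (ε ^ θ * P + (ε⁻¹) ^ q * m)) → P ≤ C' * m := by
  obtain ⟨ε, hε0, hεtop, hε⟩ := exists_mul_rpow_le_half hC hθ
  have hεq : (ε⁻¹) ^ q ≠ ⊤ := ENNReal.rpow_ne_top_of_nonneg hq (ENNReal.inv_ne_top.2 hε0)
  refine ⟨2 * (C * (ε⁻¹) ^ q), by finiteness, fun P m hP h => ?_⟩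
  rw [mul_assoc, mul_assoc]
  refine ennreal_le_two_mul_of_le_half_mul_add hP ((h ε hε0 hεtop).trans ?_)
  rw [mul_add, ← mul_assoc]
  gcongr

end Absorption

section Exhaustion

lemma iSup_rpow_mul_iSup_rpow_le {ι : Type*} [SemilatticeSup ι] {u v : ι → ℝ≥0∞} (hu : Monotone u)
    (hv : Monotone v) {q₁ q₂ : ℝ} (hq₁ : 0 < q₁) (hq₂ : 0 < q₂) :
    (⨆ m, u m) ^ q₁ * (⨆ m, v m) ^ q₂ ≤ ⨆ m, u m ^ q₁ * v m ^ q₂ := by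
  have hu' : (⨆ m, u m) ^ q₁ = ⨆ m, u m ^ q₁ := (ENNReal.orderIsoRpow q₁ hq₁).map_iSup u
  have hv' : (⨆ m, v m) ^ q₂ = ⨆ m, v m ^ q₂ := (ENNReal.orderIsoRpow q₂ hq₂).map_iSup v
  rw [hu', hv', ENNReal.iSup_mul]
  refine iSup_le fun i => ?_
  rw [ENNReal.mul_iSup]
  refine iSup_le fun j => le_iSup_of_le (i ⊔ j) ?_
  gcongr
  · exact hu le_sup_left
  · exact hv le_sup_right

lemma lintegral_tsum_rpow_mul_tsum_rpow_le {X ι : Type*} [MeasurableSpace X] {ν : Measure X}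
    {t : ℕ → Finset ι} (ht : Monotone t) (ht_mem : ∀ i, ∃ m, i ∈ t m) {f g : ι → X → ℝ≥0∞}
    (hf : ∀ i, Measurable (f i)) (hg : ∀ i, Measurable (g i)) {q₁ q₂ : ℝ} (hq₁ : 0 < q₁)
    (hq₂ : 0 < q₂) {c : ℝ≥0∞}
    (h : ∀ m, ∫⁻ x, (∑ i ∈ t m, f i x) ^ q₁ * (∑ i ∈ t m, g i x) ^ q₂ ∂ν ≤ c) :
    ∫⁻ x, (∑' i, f i x) ^ q₁ * (∑' i, g i x) ^ q₂ ∂ν ≤ c := by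
  choose φ hφ using ht_mem
  have hcof (s : Finset ι) : ∃ m, s ⊆ t m := ⟨s.sup φ, fun i hi => ht (Finset.le_sup hi) (hφ i)⟩
  have hmono (f : ι → X → ℝ≥0∞) (x : X) : Monotone fun m => ∑ i ∈ t m, f i x :=
    fun _ _ hmn => Finset.sum_le_sum_of_subset (ht hmn)
  calc ∫⁻ x, (∑' i, f i x) ^ q₁ * (∑' i, g i x) ^ q₂ ∂ν
      ≤ ∫⁻ x, ⨆ m, (∑ i ∈ t m, f i x) ^ q₁ * (∑ i ∈ t m, g i x) ^ q₂ ∂ν := by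
        gcongr with x
        rw [ENNReal.tsum_eq_iSup_sum' t hcof, ENNReal.tsum_eq_iSup_sum' t hcof]
        exact iSup_rpow_mul_iSup_rpow_le (hmono f x) (hmono g x) hq₁ hq₂
    _ = ⨆ m, ∫⁻ x, (∑ i ∈ t m, f i x) ^ q₁ * (∑ i ∈ t m, g i x) ^ q₂ ∂ν := by
        refine lintegral_iSup (fun m => ?_) fun m n hmn x => ?_
        · fun_prop
        · have := hmono f x hmn
          have := hmono g x hmn
          dsimp only at *
          gcongr
    _ ≤ c := iSup_le h

end Exhaustion

section Dichotomy

variable {a b w : ℕ → ℝ≥0∞} {q₁ q₂ : ℝ}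

lemma sum_rpow_mul_sum_rpow_le_of_mul_sum_le (hw : Monotone w) (hb : ∀ n, b n = w n * a n)
    (hq₁ : 0 ≤ q₁) (hq₂ : 0 ≤ q₂) {ε : ℝ≥0∞} (hε : ε ≠ 0) (hε' : ε ≠ ⊤) {n : ℕ}
    (h : ε * ∑ m ∈ Finset.range (n + 1), a m ≤ a n) :
    (∑ m ∈ Finset.range (n + 1), a m) ^ q₁ * (∑ m ∈ Finset.range (n + 1), b m) ^ q₂ ≤
      ε⁻¹ ^ (q₁ + q₂) * (a n ^ q₁ * b n ^ q₂) := by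
  have ha : ∑ m ∈ Finset.range (n + 1), a m ≤ ε⁻¹ * a n := by
    rwa [← ENNReal.div_eq_inv_mul, ENNReal.le_div_iff_mul_le (.inl hε) (.inl hε'), mul_comm]
  have hbn : ∑ m ∈ Finset.range (n + 1), b m ≤ ε⁻¹ * b n := calc
    ∑ m ∈ Finset.range (n + 1), b m ≤ ∑ m ∈ Finset.range (n + 1), w n * a m := by
      gcongr with m hm
      rw [hb]
      gcongr
      exact hw (Nat.lt_succ_iff.1 (Finset.mem_range.1 hm))
    _ ≤ w n * (ε⁻¹ * a n) := by rw [← Finset.mul_sum]; gcongr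
    _ = ε⁻¹ * b n := by rw [hb]; ring
  calc _ ≤ (ε⁻¹ * a n) ^ q₁ * (ε⁻¹ * b n) ^ q₂ := by gcongr
    _ = _ := by
      rw [ENNReal.mul_rpow_of_nonneg _ _ hq₁, ENNReal.mul_rpow_of_nonneg _ _ hq₂,
        ENNReal.rpow_add_of_nonneg _ _ hq₁ hq₂]
      ring

/- At each `n`, either `a n` is small against the partial sum or the last term carries it. -/
lemma sum_tsub_mul_rpow_le (hw : Monotone w) (hb : ∀ n, b n = w n * a n) {θ : ℝ} (hθ : 0 < θ)
    (hq₁ : θ < q₁) (hq₂ : 0 ≤ q₂) {ε : ℝ≥0∞} (hε : ε ≠ 0) (hε' : ε ≠ ⊤) {M : ℝ≥0∞} {L : ℕ}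
    (hM : ∀ n < L, a n ^ q₁ * b n ^ q₂ ≤ M) :
    ∑ n ∈ Finset.range L,
        ((∑ m ∈ Finset.range (n + 1), a m) ^ (q₁ - θ) * (∑ m ∈ Finset.range (n + 1), b m) ^ q₂ -
          (∑ m ∈ Finset.range n, a m) ^ (q₁ - θ) * (∑ m ∈ Finset.range n, b m) ^ q₂) * a n ^ θ ≤
      ε ^ θ * ((∑ n ∈ Finset.range L, a n) ^ q₁ * (∑ n ∈ Finset.range L, b n) ^ q₂) +
        ε⁻¹ ^ (q₁ + q₂) * M := by
  have hqθ : 0 < q₁ - θ := sub_pos.2 hq₁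
  have hA := monotone_sum_range a
  have hB := monotone_sum_range b
  have hmul (x y : ℝ≥0∞) : x ^ θ * (x ^ (q₁ - θ) * y) = x ^ q₁ * y := by
    rw [← mul_assoc, ← ENNReal.rpow_add_of_nonneg _ _ hθ.le hqθ.le, add_sub_cancel]
  rw [← hmul]
  refine sum_range_tsub_mul_le (Y := fun n => (∑ m ∈ Finset.range n, a m) ^ θ)
    (Z := fun n => (∑ m ∈ Finset.range n, a m) ^ (q₁ - θ) * (∑ m ∈ Finset.range n, b m) ^ q₂)
    (fun _ _ h => ENNReal.rpow_le_rpow (hA h) hθ.le)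
    (fun _ _ h => mul_le_mul' (ENNReal.rpow_le_rpow (hA h) hqθ.le)
      (ENNReal.rpow_le_rpow (hB h) hq₂)) (by simp [hqθ]) (fun n => ?_) fun n hn => ?_
  · exact ENNReal.rpow_le_rpow (Finset.single_le_sum_of_canonicallyOrdered (by simp)) hθ.le
  · rcases le_total (a n) (ε * ∑ m ∈ Finset.range (n + 1), a m) with h | h
    · left
      rw [← ENNReal.mul_rpow_of_nonneg _ _ hθ.le]
      gcongr
    · right
      rw [hmul]
      refine (sum_rpow_mul_sum_rpow_le_of_mul_sum_le hw hb (hθ.trans hq₁).le hq₂ hε hε' h).trans ?_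
      gcongr
      exact hM n hn

end Dichotomy

section Filtration

variable {X : Type*} [mX : MeasurableSpace X]

/-- `TailsDominated ν ℱ c r K` says that, integrated against any weight known at time `n`, the
`r`-th power of the tail `∑ m ≥ n, c m` is at most `K` times the `r`-th power of its leading term
`c n`. It is the form in which geometric decay of `c` in the mean is used. -/
def TailsDominated (ν : Measure X) (ℱ : Filtration ℕ mX) (c : ℕ → X → ℝ≥0∞) (r : ℝ)
    (K : ℝ≥0∞) : Prop :=
  ∀ (n : ℕ) (d : X → ℝ≥0∞), Measurable[ℱ n] d →
    ∫⁻ x, d x * (∑' m, c (n + m) x) ^ r ∂ν ≤ K * ∫⁻ x, d x * c n x ^ r ∂ν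

lemma exists_tailsDominated_of_geometric {r ε : ℝ} {K : ℝ≥0∞} (hr : 0 < r) (hε : 0 < ε)
    (hK : K ≠ ⊤) :
    ∃ K' ≠ (⊤ : ℝ≥0∞), ∀ (ν : Measure X) (ℱ : Filtration ℕ mX) (c : ℕ → X → ℝ≥0∞),
      (∀ n, Measurable (c n)) →
      (∀ (n m : ℕ) (d : X → ℝ≥0∞), Measurable[ℱ n] d →
        ∫⁻ x, d x * c (n + m) x ^ r ∂ν ≤ K * 2 ^ (-(m * ε)) * ∫⁻ x, d x * c n x ^ r ∂ν) →
      TailsDominated ν ℱ c r K' := by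
  set A : ℝ≥0∞ := (∑' m : ℕ, 2 ^ (-(m * (ε / 2 / r)))) ^ r
  have hA : A ≠ ⊤ := ENNReal.rpow_ne_top_of_nonneg hr.le
    (ennreal_tsum_two_rpow_neg_ne_top (by positivity))
  have hB := ennreal_tsum_two_rpow_neg_ne_top (half_pos hε)
  refine ⟨A * (K * ∑' m : ℕ, 2 ^ (-(m * (ε / 2)))), by finiteness,
    fun ν ℱ c hcm hc n d hd => ?_⟩
  have hd' : Measurable d := hd.mono (ℱ.le n) le_rfl
  have hdecay (m : ℕ) : 2 ^ (m * (ε / 2)) * ∫⁻ x, d x * c (n + m) x ^ r ∂ν ≤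
      K * 2 ^ (-(m * (ε / 2))) * ∫⁻ x, d x * c n x ^ r ∂ν := by
    have hexp : m * (ε / 2) + -(m * ε) = -(m * (ε / 2)) := by ring
    refine (mul_le_mul_right (hc n m d hd) _).trans_eq ?_
    rw [← mul_assoc, mul_left_comm, ← ennreal_two_rpow_add, hexp]
  calc ∫⁻ x, d x * (∑' m, c (n + m) x) ^ r ∂ν
      ≤ ∫⁻ x, A * ∑' m : ℕ, 2 ^ (m * (ε / 2)) * (d x * c (n + m) x ^ r) ∂ν := by
        refine lintegral_mono fun x => ?_
        simp only [mul_left_comm _ (d x), ENNReal.tsum_mul_left]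
        gcongr
        exact ennreal_tsum_rpow_le _ hr
    _ = A * ∑' m : ℕ, 2 ^ (m * (ε / 2)) * ∫⁻ x, d x * c (n + m) x ^ r ∂ν := by
        rw [lintegral_const_mul' _ _ hA, lintegral_tsum fun m => by fun_prop]
        congr! 3 with m
        rw [lintegral_const_mul' _ _ (by finiteness)]
    _ ≤ A * ∑' m : ℕ, K * 2 ^ (-(m * (ε / 2))) * ∫⁻ x, d x * c n x ^ r ∂ν := by
        gcongr A * ?_
        exact ENNReal.tsum_le_tsum hdecay
    _ = _ := by rw [ENNReal.tsum_mul_right, ENNReal.tsum_mul_left, mul_assoc A]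

variable {ν : Measure X} {ℱ : Filtration ℕ mX} {c u : ℕ → X → ℝ≥0∞} {r : ℝ} {K : ℝ≥0∞}

lemma measurable_succ_tsub (hu0 : u 0 = 0) (hu : Adapted ℱ fun n => u (n + 1)) (n : ℕ) :
    Measurable[ℱ n] fun x => u (n + 1) x - u n x := by
  cases n with
  | zero => simpa [hu0] using hu 0
  | succ n => exact (hu (n + 1)).sub ((hu n).mono (ℱ.mono n.le_succ) le_rfl)

lemma sum_range_le_add_tsum (c : ℕ → ℝ≥0∞) (n L : ℕ) :
    ∑ m ∈ Finset.range L, c m ≤ ∑ m ∈ Finset.range n, c m + ∑' m, c (n + m) := by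
  simp only [add_comm n]
  rw [Summable.sum_add_tsum_nat_add' ENNReal.summable]
  exact ENNReal.sum_le_tsum _

namespace TailsDominated

lemma lintegral_mul_sum_range_rpow_le (hc : TailsDominated ν ℱ c r K)
    (hcm : ∀ n, Measurable (c n)) (hr : 0 ≤ r) {n : ℕ} {d : X → ℝ≥0∞} (hd : Measurable[ℱ n] d)
    (L : ℕ) :
    ∫⁻ x, d x * (∑ m ∈ Finset.range L, c m x) ^ r ∂ν ≤
      2 ^ r * (1 + K) * ∫⁻ x, d x * (∑ m ∈ Finset.range (n + 1), c m x) ^ r ∂ν := by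
  have hd' : Measurable d := hd.mono (ℱ.le n) le_rfl
  set I := ∫⁻ x, d x * (∑ m ∈ Finset.range (n + 1), c m x) ^ r ∂ν
  calc ∫⁻ x, d x * (∑ m ∈ Finset.range L, c m x) ^ r ∂ν
      ≤ ∫⁻ x, 2 ^ r * (d x * (∑ m ∈ Finset.range (n + 1), c m x) ^ r +
          d x * (∑' m, c (n + m) x) ^ r) ∂ν := by
        refine lintegral_mono fun x => ?_
        rw [← mul_add, mul_left_comm]
        gcongr
        refine le_trans ?_ (ENNReal.add_rpow_le_two_rpow_mul_rpow_add_rpow _ _ hr)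
        gcongr
        refine (sum_range_le_add_tsum _ n L).trans ?_
        gcongr
        exact n.le_succ
    _ = 2 ^ r * (I + ∫⁻ x, d x * (∑' m, c (n + m) x) ^ r ∂ν) := by
        rw [lintegral_const_mul' _ _ (by simp), lintegral_add_left (by fun_prop)]
    _ ≤ 2 ^ r * (I + K * I) := by
        gcongr
        refine (hc n _ hd).trans ?_
        refine mul_le_mul_right (lintegral_mono fun x => ?_) K
        gcongr
        exact Finset.single_le_sum_of_canonicallyOrdered (f := fun m => c m x) (by simp)
    _ = 2 ^ r * (1 + K) * I := by ring

lemma lintegral_mul_sum_rpow_le (hc : TailsDominated ν ℱ c r K) (hcm : ∀ n, Measurable (c n))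
    (hr : 0 ≤ r) (hu : Monotone u) (hu0 : u 0 = 0) (hum : Adapted ℱ fun n => u (n + 1))
    (L : ℕ) :
    ∫⁻ x, u L x * (∑ n ∈ Finset.range L, c n x) ^ r ∂ν ≤
      2 ^ r * (1 + K) * ∑ n ∈ Finset.range L,
        ∫⁻ x, (u (n + 1) x - u n x) * (∑ m ∈ Finset.range (n + 1), c m x) ^ r ∂ν := by
  have hd n : Measurable[ℱ n] fun x => u (n + 1) x - u n x := measurable_succ_tsub hu0 hum n
  have hd' n : Measurable fun x => u (n + 1) x - u n x := (hd n).mono (ℱ.le n) le_rfl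
  calc ∫⁻ x, u L x * (∑ n ∈ Finset.range L, c n x) ^ r ∂ν
      = ∑ n ∈ Finset.range L,
          ∫⁻ x, (u (n + 1) x - u n x) * (∑ m ∈ Finset.range L, c m x) ^ r ∂ν := by
        rw [← lintegral_finsetSum _ fun n _ => by fun_prop]
        congr! with x
        rw [← Finset.sum_mul, sum_range_succ_tsub (u := fun n => u n x) (fun _ _ h => hu h x)
          (congrFun hu0 x)]
    _ ≤ _ := by
        rw [Finset.mul_sum]
        exact Finset.sum_le_sum fun n _ => hc.lintegral_mul_sum_range_rpow_le hcm hr (hd n) L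

lemma sum_lintegral_succ_mul_le (hc : TailsDominated ν ℱ c 1 K) (hcm : ∀ n, Measurable (c n))
    (hu : Monotone u) (hu0 : u 0 = 0) (hum : Adapted ℱ fun n => u (n + 1)) (L : ℕ) :
    ∑ n ∈ Finset.range L, ∫⁻ x, u (n + 1) x * c n x ∂ν ≤
      K * ∑ n ∈ Finset.range L, ∫⁻ x, (u (n + 1) x - u n x) * c n x ∂ν := by
  have hd n : Measurable[ℱ n] fun x => u (n + 1) x - u n x := measurable_succ_tsub hu0 hum n
  have hd' n : Measurable fun x => u (n + 1) x - u n x := (hd n).mono (ℱ.le n) le_rfl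
  have hsum (n : ℕ) : ∫⁻ x, u (n + 1) x * c n x ∂ν =
      ∑ m ∈ Finset.range (n + 1), ∫⁻ x, (u (m + 1) x - u m x) * c n x ∂ν := by
    rw [← lintegral_finsetSum _ fun n _ => by fun_prop]
    congr! with x
    rw [← Finset.sum_mul, sum_range_succ_tsub (u := fun n => u n x) (fun _ _ h => hu h x)
      (congrFun hu0 x)]
  calc ∑ n ∈ Finset.range L, ∫⁻ x, u (n + 1) x * c n x ∂ν
      = ∑ m ∈ Finset.range L, ∑ n ∈ Finset.Ico m L, ∫⁻ x, (u (m + 1) x - u m x) * c n x ∂ν := by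
        simp only [hsum]
        refine Finset.sum_comm' fun m n => ?_
        simp only [Finset.mem_range, Finset.mem_Ico]
        omega
    _ ≤ ∑ m ∈ Finset.range L, ∫⁻ x, (u (m + 1) x - u m x) * ∑' i, c (m + i) x ∂ν := by
        gcongr with m
        rw [← lintegral_finsetSum _ fun n _ => by fun_prop]
        gcongr with x
        rw [← Finset.mul_sum, Finset.sum_Ico_eq_sum_range]
        gcongr
        exact ENNReal.sum_le_tsum _
    _ ≤ _ := by
        rw [Finset.mul_sum]
        refine Finset.sum_le_sum fun n _ => ?_
        simpa using hc n _ (hd n)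

end TailsDominated

section PartialSumProducts

variable {a b w : ℕ → X → ℝ≥0∞} {q₁ q₂ θ : ℝ} {K₁ K₂ : ℝ≥0∞}

lemma adapted_sum_range_succ (ha : Adapted ℱ a) :
    Adapted ℱ fun n x => ∑ m ∈ Finset.range (n + 1), a m x := fun _ =>
  Finset.measurable_sum _ fun _ hm => ha.measurable_le (Nat.lt_succ_iff.1 (Finset.mem_range.1 hm))

lemma lintegral_sum_rpow_mul_sum_rpow_le_sum (ha : Adapted ℱ a) (hb : Adapted ℱ b)
    (hθ : 0 < θ) (hθ1 : θ ≤ 1) (hq₁ : θ < q₁) (hq₂ : 0 ≤ q₂) (hbK : TailsDominated ν ℱ b q₂ K₂)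
    (L : ℕ) :
    ∫⁻ x, (∑ n ∈ Finset.range L, a n x) ^ q₁ * (∑ n ∈ Finset.range L, b n x) ^ q₂ ∂ν ≤
      2 ^ q₂ * (1 + K₂) * (ENNReal.ofReal (max 1 q₁) * ∑ n ∈ Finset.range L,
        ∫⁻ x, (∑ m ∈ Finset.range (n + 1), a m x) ^ (q₁ - θ) *
          (∑ m ∈ Finset.range (n + 1), b m x) ^ q₂ * a n x ^ θ ∂ν) := by
  have hq₁0 : 0 < q₁ := hθ.trans hq₁
  refine (hbK.lintegral_mul_sum_rpow_le (u := fun n x => (∑ m ∈ Finset.range n, a m x) ^ q₁)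
    (fun _ => hb.measurable) hq₂ (fun _ _ h x => ?_) (by ext; simp [hq₁0])
    (fun n => (adapted_sum_range_succ ha n).pow_const _) L).trans ?_
  · exact ENNReal.rpow_le_rpow (monotone_sum_range (fun m => a m x) h) hq₁0.le
  · gcongr
    rw [Finset.mul_sum]
    refine Finset.sum_le_sum fun n _ => ?_
    rw [← lintegral_const_mul' _ _ ENNReal.ofReal_ne_top]
    refine lintegral_mono fun x => ?_
    rw [Finset.sum_range_succ (fun m => a m x)]
    refine (mul_le_mul_left (ennreal_add_rpow_tsub_rpow_le _ _ hθ hθ1 hq₁) _).trans_eq ?_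
    ring

lemma sum_lintegral_tsub_mul_rpow_le (ha : ∀ n, Measurable (a n)) (hb : ∀ n, Measurable (b n))
    (hw : Monotone w) (hbw : ∀ n x, b n x = w n x * a n x) (hθ : 0 < θ) (hq₁ : θ < q₁)
    (hq₂ : 0 ≤ q₂) {M : X → ℝ≥0∞} {L : ℕ} (hM : ∀ n < L, ∀ x, a n x ^ q₁ * b n x ^ q₂ ≤ M x)
    {ε : ℝ≥0∞} (hε : ε ≠ 0) (hε' : ε ≠ ⊤) :
    ∑ n ∈ Finset.range L, ∫⁻ x, ((∑ m ∈ Finset.range (n + 1), a m x) ^ (q₁ - θ) *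
          (∑ m ∈ Finset.range (n + 1), b m x) ^ q₂ - (∑ m ∈ Finset.range n, a m x) ^ (q₁ - θ) *
          (∑ m ∈ Finset.range n, b m x) ^ q₂) * a n x ^ θ ∂ν ≤
      ε ^ θ *
          ∫⁻ x, (∑ n ∈ Finset.range L, a n x) ^ q₁ * (∑ n ∈ Finset.range L, b n x) ^ q₂ ∂ν +
        ε⁻¹ ^ (q₁ + q₂) * ∫⁻ x, M x ∂ν := by
  have hεq : ε⁻¹ ^ (q₁ + q₂) ≠ ⊤ :=
    ENNReal.rpow_ne_top_of_nonneg (by linarith) (ENNReal.inv_ne_top.2 hε)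
  rw [← lintegral_finsetSum _ fun n _ => by fun_prop,
    ← lintegral_const_mul' _ _ (ENNReal.rpow_ne_top_of_nonneg hθ.le hε'),
    ← lintegral_const_mul' _ _ hεq, ← lintegral_add_left (by fun_prop)]
  exact lintegral_mono fun x => sum_tsub_mul_rpow_le (w := fun n => w n x) (fun _ _ h => hw h x)
    (fun n => hbw n x) hθ hq₁ hq₂ hε hε' fun n hn => hM n hn x

lemma lintegral_sum_rpow_mul_sum_rpow_le_rpow_mul_add (ha : Adapted ℱ a) (hb : Adapted ℱ b)
    (hw : Monotone w) (hbw : ∀ n x, b n x = w n x * a n x) (hθ : 0 < θ) (hθ1 : θ ≤ 1)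
    (hq₁ : θ < q₁) (hq₂ : 0 ≤ q₂) (haK : TailsDominated ν ℱ (fun n x => a n x ^ θ) 1 K₁)
    (hbK : TailsDominated ν ℱ b q₂ K₂) {M : X → ℝ≥0∞} {L : ℕ}
    (hM : ∀ n < L, ∀ x, a n x ^ q₁ * b n x ^ q₂ ≤ M x) {ε : ℝ≥0∞} (hε : ε ≠ 0) (hε' : ε ≠ ⊤) :
    ∫⁻ x, (∑ n ∈ Finset.range L, a n x) ^ q₁ * (∑ n ∈ Finset.range L, b n x) ^ q₂ ∂ν ≤
      2 ^ q₂ * (1 + K₂) * ENNReal.ofReal (max 1 q₁) * K₁ *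
        (ε ^ θ *
          ∫⁻ x, (∑ n ∈ Finset.range L, a n x) ^ q₁ * (∑ n ∈ Finset.range L, b n x) ^ q₂ ∂ν +
        ε⁻¹ ^ (q₁ + q₂) * ∫⁻ x, M x ∂ν) := by
  have hqθ : 0 < q₁ - θ := sub_pos.2 hq₁
  set Z : ℕ → X → ℝ≥0∞ := fun n x =>
    (∑ m ∈ Finset.range n, a m x) ^ (q₁ - θ) * (∑ m ∈ Finset.range n, b m x) ^ q₂ with hZ
  have hZmono : Monotone Z := fun m n h x => mul_le_mul'
    (ENNReal.rpow_le_rpow (monotone_sum_range (fun m => a m x) h) hqθ.le)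
    (ENNReal.rpow_le_rpow (monotone_sum_range (fun m => b m x) h) hq₂)
  have hZ0 : Z 0 = 0 := by ext; simp [hZ, hqθ]
  have hZm : Adapted ℱ fun n => Z (n + 1) := fun n =>
    ((adapted_sum_range_succ ha n).pow_const _).mul ((adapted_sum_range_succ hb n).pow_const _)
  have hZa : ∑ n ∈ Finset.range L, ∫⁻ x, Z (n + 1) x * a n x ^ θ ∂ν ≤ K₁ * (ε ^ θ *
      ∫⁻ x, (∑ n ∈ Finset.range L, a n x) ^ q₁ * (∑ n ∈ Finset.range L, b n x) ^ q₂ ∂ν +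
        ε⁻¹ ^ (q₁ + q₂) * ∫⁻ x, M x ∂ν) := by
    refine (haK.sum_lintegral_succ_mul_le (fun n => ha.measurable.pow_const θ)
      hZmono hZ0 hZm L).trans ?_
    gcongr
    exact sum_lintegral_tsub_mul_rpow_le (fun _ => ha.measurable) (fun _ => hb.measurable) hw hbw
      hθ hq₁ hq₂ hM hε hε'
  refine (lintegral_sum_rpow_mul_sum_rpow_le_sum ha hb hθ hθ1 hq₁ hq₂ hbK L).trans ?_
  rw [mul_assoc _ K₁, mul_assoc _ (ENNReal.ofReal _)]
  gcongr

/- The previous estimate reproduces its left-hand side with a factor `ε ^ θ`, which is absorbed. -/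
theorem exists_lintegral_sum_rpow_mul_sum_rpow_le (ν : Measure X) (hθ : 0 < θ) (hθ1 : θ ≤ 1)
    (hq₁ : θ < q₁) (hq₂ : 0 ≤ q₂) (hK₁ : K₁ ≠ ⊤) (hK₂ : K₂ ≠ ⊤) :
    ∃ C ≠ (⊤ : ℝ≥0∞), ∀ (ℱ : Filtration ℕ mX) (a b w : ℕ → X → ℝ≥0∞) (M : X → ℝ≥0∞) (L : ℕ),
      Adapted ℱ a → Adapted ℱ b → Monotone w → (∀ n x, b n x = w n x * a n x) →
      TailsDominated ν ℱ (fun n x => a n x ^ θ) 1 K₁ → TailsDominated ν ℱ b q₂ K₂ →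
      (∀ n < L, ∀ x, a n x ^ q₁ * b n x ^ q₂ ≤ M x) →
      ∫⁻ x, (∑ n ∈ Finset.range L, a n x) ^ q₁ * (∑ n ∈ Finset.range L, b n x) ^ q₂ ∂ν ≠ ⊤ →
      ∫⁻ x, (∑ n ∈ Finset.range L, a n x) ^ q₁ * (∑ n ∈ Finset.range L, b n x) ^ q₂ ∂ν ≤
        C * ∫⁻ x, M x ∂ν := by
  have hK : 2 ^ q₂ * (1 + K₂) * ENNReal.ofReal (max 1 q₁) * K₁ ≠ ⊤ := by finiteness
  obtain ⟨C, hC, h⟩ :=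
    exists_forall_le_mul_of_forall_le_rpow_mul_add hK hθ (q := q₁ + q₂) (by linarith)
  refine ⟨C, hC, fun ℱ a b w M L ha hb hw hbw haK hbK hM hfin => h _ _ hfin fun ε hε hε' => ?_⟩
  exact lintegral_sum_rpow_mul_sum_rpow_le_rpow_mul_add ha hb hw hbw hθ hθ1 hq₁ hq₂ haK hbK hM
    hε hε'

end PartialSumProducts

end Filtration

section DyadicGrid

lemma ennreal_ofReal_two_zpow (k : ℤ) : ENNReal.ofReal (2 ^ k) = 2 ^ (k : ℝ) := by
  rw [← Real.rpow_intCast, ← ENNReal.ofReal_rpow_of_pos two_pos, ENNReal.ofReal_ofNat]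

variable {N : ℕ}

/-- The index of the dyadic cube of side `2 ^ k` containing `x`; the cubes are half-open. -/
def dyadicIndex (k : ℤ) (x : Euc N) : Fin N → ℤ := fun i => ⌊x i / (2 : ℝ) ^ k⌋

/-- The union of the dyadic cube of side `2 ^ k` containing `x` and its neighbours, a discrete
substitute for the ball of radius `2 ^ k` about `x`. -/
def dyadicNhd (k : ℤ) (x : Euc N) : Set (Euc N) :=
  dyadicIndex k ⁻¹' Icc (dyadicIndex k x - 1) (dyadicIndex k x + 1)

/-- The mass of `dyadicNhd k x`, a discrete substitute for `μ (ball x (2 ^ k))`. -/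
def dyadicMass (μ : Measure (Euc N)) (k : ℤ) (x : Euc N) : ℝ≥0∞ := μ (dyadicNhd k x)

lemma mem_dyadicNhd {k : ℤ} {x y : Euc N} :
    y ∈ dyadicNhd k x ↔ ∀ i, |dyadicIndex k y i - dyadicIndex k x i| ≤ 1 := by
  simp only [dyadicNhd, mem_preimage, mem_Icc, Pi.le_def, Pi.sub_apply, Pi.add_apply,
    Pi.one_apply, ← forall_and, abs_le]
  refine forall_congr' fun i => ?_
  omega

lemma mem_dyadicNhd_comm {k : ℤ} {x y : Euc N} : y ∈ dyadicNhd k x ↔ x ∈ dyadicNhd k y := by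
  simp only [mem_dyadicNhd, abs_sub_comm]

lemma dyadicIndex_succ (k : ℤ) (x : Euc N) (i : Fin N) :
    dyadicIndex (k + 1) x i = dyadicIndex k x i / 2 := by
  rw [dyadicIndex, zpow_add_one₀ two_ne_zero, ← div_div]
  exact_mod_cast Int.floor_div_natCast (x i / (2 : ℝ) ^ k) 2

lemma exists_dyadicIndex_eq_comp {j k : ℤ} (h : j ≤ k) :
    ∃ φ : (Fin N → ℤ) → Fin N → ℤ, dyadicIndex k = φ ∘ dyadicIndex (N := N) j := by
  induction k, h using Int.leInduction with
  | base => exact ⟨id, rfl⟩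
  | succ k _ ih =>
    obtain ⟨φ, hφ⟩ := ih
    refine ⟨fun z i => φ z i / 2, ?_⟩
    ext x i
    rw [dyadicIndex_succ, hφ]
    rfl

lemma dyadicNhd_mono (x : Euc N) : Monotone fun k : ℤ => dyadicNhd k x := by
  refine monotone_int_of_le_succ fun k y hy => mem_dyadicNhd.2 fun i => ?_
  have := mem_dyadicNhd.1 hy i
  rw [dyadicIndex_succ, dyadicIndex_succ]
  rw [abs_le] at this ⊢
  omega

lemma dyadicMass_mono (μ : Measure (Euc N)) {j k : ℤ} (h : j ≤ k) (x : Euc N) :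
    dyadicMass μ j x ≤ dyadicMass μ k x :=
  measure_mono (dyadicNhd_mono x h)

@[fun_prop]
lemma measurable_dyadicIndex (k : ℤ) : Measurable (dyadicIndex (N := N) k) :=
  measurable_pi_lambda _ fun i => Int.measurable_floor.comp (by fun_prop)

@[fun_prop]
lemma measurable_dyadicMass (μ : Measure (Euc N)) (k : ℤ) : Measurable (dyadicMass μ k) :=
  (Measurable.of_discrete (f := fun z => μ (dyadicIndex k ⁻¹' Icc (z - 1) (z + 1)))).comp
    (measurable_dyadicIndex k)

lemma measurableSet_dyadicNhd (k : ℤ) (x : Euc N) : MeasurableSet (dyadicNhd k x) :=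
  measurable_dyadicIndex k .of_discrete

lemma measurableSet_setOf_mem_dyadicNhd (k : ℤ) :
    MeasurableSet {z : Euc N × Euc N | z.2 ∈ dyadicNhd k z.1} :=
  ((measurable_dyadicIndex k).prodMap (measurable_dyadicIndex k))
    (.of_discrete (s := {z : (Fin N → ℤ) × (Fin N → ℤ) | z.2 ∈ Icc (z.1 - 1) (z.1 + 1)}))

lemma abs_floor_sub_floor_le_one {a b : ℝ} (h : |a - b| < 1) : |⌊a⌋ - ⌊b⌋| ≤ 1 := by
  have ha := Int.floor_le a
  have ha' := Int.lt_floor_add_one a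
  have hb := Int.floor_le b
  have hb' := Int.lt_floor_add_one b
  rw [abs_lt] at h
  rw [abs_le, ← Int.sub_one_lt_iff, ← Int.lt_add_one_iff]
  constructor <;> · rify; linarith

lemma abs_sub_lt_two_of_abs_floor_sub_le_one {a b : ℝ} (h : |⌊a⌋ - ⌊b⌋| ≤ 1) : |a - b| < 2 := by
  have ha := Int.floor_le a
  have ha' := Int.lt_floor_add_one a
  have hb := Int.floor_le b
  have hb' := Int.lt_floor_add_one b
  rify at h
  rw [abs_le] at h
  rw [abs_lt]
  constructor <;> linarith

lemma ball_subset_dyadicNhd (k : ℤ) (x : Euc N) : ball x (2 ^ k) ⊆ dyadicNhd k x := by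
  refine fun y hy => mem_dyadicNhd.2 fun i => abs_floor_sub_floor_le_one ?_
  have h2 : (0 : ℝ) < 2 ^ k := by positivity
  rw [← sub_div, abs_div, abs_of_pos h2, div_lt_one h2]
  exact (PiLp.norm_apply_le (y - x) i).trans_lt (mem_ball_iff_norm.1 hy)

lemma norm_le_sum_abs (v : Euc N) : ‖v‖ ≤ ∑ i, |v i| := by
  rw [EuclideanSpace.norm_eq]
  refine Real.sqrt_le_iff.2 ⟨by positivity, ?_⟩
  exact Finset.sum_sq_le_sq_sum_of_nonneg fun i _ => abs_nonneg _

lemma dyadicNhd_subset_ball (k : ℤ) (x : Euc N) :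
    dyadicNhd k x ⊆ ball x ((2 * N + 1) * 2 ^ k) := by
  intro y hy
  have h2 : (0 : ℝ) < 2 ^ k := by positivity
  have hi (i : Fin N) : |(y - x) i| ≤ 2 * 2 ^ k := by
    have := (abs_sub_lt_two_of_abs_floor_sub_le_one (mem_dyadicNhd.1 hy i)).le
    rwa [← sub_div, abs_div, abs_of_pos h2, div_le_iff₀ h2] at this
  rw [mem_ball_iff_norm]
  calc ‖y - x‖ ≤ ∑ i, |(y - x) i| := norm_le_sum_abs _
    _ ≤ ∑ _i : Fin N, 2 * 2 ^ k := Finset.sum_le_sum fun i _ => hi i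
    _ < (2 * N + 1) * 2 ^ k := by
      rw [Finset.sum_const, Finset.card_univ, Fintype.card_fin, nsmul_eq_mul]
      linarith

end DyadicGrid

section Averaging

variable {N : ℕ}

lemma volume_map_dyadicIndex (k : ℤ) :
    (volume : Measure (Euc N)).map (dyadicIndex k) = (2 : ℝ≥0∞) ^ ((k : ℝ) * N) • .count := by
  refine Measure.ext_of_singleton fun z => ?_
  have h2 : (0 : ℝ) < 2 ^ k := by positivity
  have hfib : dyadicIndex (N := N) k ⁻¹' {z} =
      WithLp.ofLp ⁻¹' univ.pi fun i => Ico (z i * (2 : ℝ) ^ k) ((z i + 1) * 2 ^ k) := by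
    ext x
    simp only [mem_preimage, mem_singleton_iff, funext_iff, mem_univ_pi, mem_Ico, dyadicIndex,
      Int.floor_eq_iff, le_div_iff₀ h2, div_lt_iff₀ h2]
  rw [Measure.map_apply (measurable_dyadicIndex k) (measurableSet_singleton z), hfib,
    (PiLp.volume_preserving_ofLp _).measure_preimage
      (MeasurableSet.univ_pi fun _ => measurableSet_Ico).nullMeasurableSet,
    Real.volume_pi_Ico]
  simp only [add_mul, one_mul, add_sub_cancel_left, ennreal_ofReal_two_zpow, Finset.prod_const,
    Finset.card_univ, Fintype.card_fin, Measure.smul_apply, Measure.count_singleton, smul_eq_mul,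
    mul_one, ENNReal.rpow_mul, ENNReal.rpow_natCast]

lemma setLIntegral_dyadicNhd_comp_dyadicIndex (k : ℤ) (y : Euc N) (g : (Fin N → ℤ) → ℝ≥0∞) :
    ∫⁻ x in dyadicNhd k y, g (dyadicIndex k x) = 2 ^ ((k : ℝ) * N) *
      ∑ z ∈ Finset.Icc (dyadicIndex k y - 1) (dyadicIndex k y + 1), g z := by
  rw [dyadicNhd, ← setLIntegral_map .of_discrete .of_discrete (measurable_dyadicIndex k),
    volume_map_dyadicIndex, ← Finset.coe_Icc, Measure.restrict_smul, lintegral_smul_measure,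
    lintegral_finset, smul_eq_mul]
  simp only [Measure.count_singleton, mul_one]

lemma volume_dyadicNhd (k : ℤ) (y : Euc N) :
    volume (dyadicNhd k y) = 3 ^ N * 2 ^ ((k : ℝ) * N) := by
  rw [← setLIntegral_one, setLIntegral_dyadicNhd_comp_dyadicIndex k y fun _ => 1,
    Finset.sum_const, Pi.card_Icc, mul_comm]
  have hcard (z : ℤ) : (z + 1 + 1 - (z - 1)).toNat = 3 := by omega
  simp [Int.card_Icc, hcard]

lemma lintegral_mul_dyadicMass (μ : Measure (Euc N)) [SFinite μ] (k : ℤ) {d : Euc N → ℝ≥0∞}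
    (hd : Measurable d) :
    ∫⁻ x, d x * dyadicMass μ k x = ∫⁻ y, (∫⁻ x in dyadicNhd k y, d x) ∂μ := by
  calc ∫⁻ x, d x * dyadicMass μ k x
      = ∫⁻ x, (∫⁻ y, {z : Euc N × Euc N | z.2 ∈ dyadicNhd k z.1}.indicator
          (fun z => d z.1) (x, y) ∂μ) := by
        congr! with x
        rw [dyadicMass, ← lintegral_indicator_const (measurableSet_dyadicNhd k x)]
        rfl
    _ = ∫⁻ y, (∫⁻ x, {z : Euc N × Euc N | z.2 ∈ dyadicNhd k z.1}.indicator
          (fun z => d z.1) (x, y)) ∂μ :=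
        lintegral_lintegral_swap ((hd.comp measurable_fst).indicator
          (measurableSet_setOf_mem_dyadicNhd k)).aemeasurable
    _ = ∫⁻ y, (∫⁻ x in dyadicNhd k y, d x) ∂μ := by
        refine lintegral_congr fun y => ?_
        rw [← lintegral_indicator (measurableSet_dyadicNhd k y)]
        refine lintegral_congr fun x => ?_
        classical
        simp only [indicator_apply, mem_ofPred_eq, mem_dyadicNhd_comm]

variable {j k : ℤ}

lemma setLIntegral_dyadicNhd_le (h : j ≤ k) (g : (Fin N → ℤ) → ℝ≥0∞) (y : Euc N) :
    ∫⁻ x in dyadicNhd j y, g (dyadicIndex k x) ≤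
      3 ^ N * 2 ^ (((j : ℝ) - k) * N) * ∫⁻ x in dyadicNhd k y, g (dyadicIndex k x) := by
  set S := ∑ z ∈ Finset.Icc (dyadicIndex k y - 1) (dyadicIndex k y + 1), g z
  have hgS : ∀ x ∈ dyadicNhd j y, g (dyadicIndex k x) ≤ S := fun x hx =>
    Finset.single_le_sum_of_canonicallyOrdered (Finset.mem_Icc.2 (dyadicNhd_mono y h hx))
  have hscale : (2 : ℝ≥0∞) ^ ((j : ℝ) * N) = 2 ^ (((j : ℝ) - k) * N) * 2 ^ ((k : ℝ) * N) := by
    rw [← ennreal_two_rpow_add, ← add_mul, sub_add_cancel]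
  calc ∫⁻ x in dyadicNhd j y, g (dyadicIndex k x)
      ≤ ∫⁻ _ in dyadicNhd j y, S := setLIntegral_mono' (measurableSet_dyadicNhd j y) hgS
    _ = 3 ^ N * 2 ^ (((j : ℝ) - k) * N) * (2 ^ ((k : ℝ) * N) * S) := by
        rw [setLIntegral_const, volume_dyadicNhd, hscale]
        ring
    _ = _ := by rw [setLIntegral_dyadicNhd_comp_dyadicIndex]

lemma lintegral_mul_dyadicMass_le (μ : Measure (Euc N)) [SFinite μ] (h : j ≤ k)
    (g : (Fin N → ℤ) → ℝ≥0∞) :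
    ∫⁻ x, g (dyadicIndex k x) * dyadicMass μ j x ≤
      3 ^ N * 2 ^ (((j : ℝ) - k) * N) * ∫⁻ x, g (dyadicIndex k x) * dyadicMass μ k x := by
  have hg : Measurable g := .of_discrete
  have hC : (3 : ℝ≥0∞) ^ N * 2 ^ (((j : ℝ) - k) * N) ≠ ⊤ := by finiteness
  rw [lintegral_mul_dyadicMass μ j (by fun_prop), lintegral_mul_dyadicMass μ k (by fun_prop),
    ← lintegral_const_mul' _ _ hC]
  exact lintegral_mono fun y => setLIntegral_dyadicNhd_le h g y

lemma lintegral_mul_dyadicMass_rpow_le_of_one_le (μ : Measure (Euc N)) [SFinite μ] (h : j ≤ k)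
    (g : (Fin N → ℤ) → ℝ≥0∞) {t : ℝ} (ht : 1 ≤ t) :
    ∫⁻ x, g (dyadicIndex k x) * dyadicMass μ j x ^ t ≤
      3 ^ N * 2 ^ (((j : ℝ) - k) * N) * ∫⁻ x, g (dyadicIndex k x) * dyadicMass μ k x ^ t := by
  have ht' : 0 ≤ t - 1 := sub_nonneg.2 ht
  calc ∫⁻ x, g (dyadicIndex k x) * dyadicMass μ j x ^ t
      ≤ ∫⁻ x, g (dyadicIndex k x) * dyadicMass μ k x ^ (t - 1) * dyadicMass μ j x := by
        refine lintegral_mono fun x => ?_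
        have hpow : dyadicMass μ j x ^ t = dyadicMass μ j x ^ (t - 1) * dyadicMass μ j x := by
          simpa using ENNReal.rpow_add_of_nonneg (x := dyadicMass μ j x) _ _ ht' zero_le_one
        rw [hpow, mul_assoc]
        gcongr
        exact dyadicMass_mono μ h x
    _ ≤ 3 ^ N * 2 ^ (((j : ℝ) - k) * N) *
          ∫⁻ x, g (dyadicIndex k x) * dyadicMass μ k x ^ (t - 1) * dyadicMass μ k x :=
        lintegral_mul_dyadicMass_le μ h fun z =>
          g z * μ (dyadicIndex k ⁻¹' Icc (z - 1) (z + 1)) ^ (t - 1)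
    _ ≤ _ := by
        refine mul_le_mul_right (lintegral_mono fun x => ?_) _
        rw [mul_assoc]
        gcongr
        exact ennreal_rpow_sub_one_mul_le _ (by linarith)

/- For `t ≤ 1` concavity compares the mass at scale `j` with its expected value
`2 ^ ((j - k) * N)` times the mass at scale `k`. -/
lemma lintegral_mul_dyadicMass_rpow_le_of_le_one (μ : Measure (Euc N)) [SFinite μ] (h : j ≤ k)
    (g : (Fin N → ℤ) → ℝ≥0∞) {t : ℝ} (ht : 0 < t) (ht1 : t ≤ 1) :
    ∫⁻ x, g (dyadicIndex k x) * dyadicMass μ j x ^ t ≤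
      (3 ^ N + 1) * 2 ^ (((j : ℝ) - k) * (N * t)) *
        ∫⁻ x, g (dyadicIndex k x) * dyadicMass μ k x ^ t := by
  set l : ℝ≥0∞ := 2 ^ (((j : ℝ) - k) * N) with hl
  have hlt : l ^ t = 2 ^ (((j : ℝ) - k) * (N * t)) := by rw [hl, ← ENNReal.rpow_mul, mul_assoc]
  have hl' : l ≠ ⊤ := by finiteness
  have hg : Measurable g := .of_discrete
  have hmean : ∫⁻ x, g (dyadicIndex k x) * (l * dyadicMass μ k x) ^ (t - 1) * dyadicMass μ j x ≤
      3 ^ N * ∫⁻ x, g (dyadicIndex k x) * (l * dyadicMass μ k x) ^ t := calc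
    _ ≤ 3 ^ N * l *
        ∫⁻ x, g (dyadicIndex k x) * (l * dyadicMass μ k x) ^ (t - 1) * dyadicMass μ k x :=
      lintegral_mul_dyadicMass_le μ h fun z =>
        g z * (l * μ (dyadicIndex k ⁻¹' Icc (z - 1) (z + 1))) ^ (t - 1)
    _ ≤ _ := by
      rw [mul_assoc, ← lintegral_const_mul' _ _ hl']
      refine mul_le_mul_right (lintegral_mono fun x => ?_) _
      rw [mul_left_comm, mul_assoc]
      gcongr
      exact ennreal_rpow_sub_one_mul_le _ ht
  calc ∫⁻ x, g (dyadicIndex k x) * dyadicMass μ j x ^ t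
      ≤ ∫⁻ x, g (dyadicIndex k x) * (l * dyadicMass μ k x) ^ (t - 1) * dyadicMass μ j x +
          g (dyadicIndex k x) * (l * dyadicMass μ k x) ^ t := by
        refine lintegral_mono fun x => ?_
        rw [mul_assoc, ← mul_add, mul_comm (_ ^ (t - 1))]
        gcongr
        exact ennreal_rpow_le_mul_rpow_sub_one_add _ _ ht ht1
    _ ≤ (3 ^ N + 1) * ∫⁻ x, g (dyadicIndex k x) * (l * dyadicMass μ k x) ^ t := by
        rw [lintegral_add_left (by fun_prop), add_mul, one_mul]
        gcongr
    _ = _ := by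
        rw [mul_assoc, ← hlt, ← lintegral_const_mul' _ _ (ENNReal.rpow_ne_top_of_nonneg ht.le hl')]
        congr! 3 with x
        rw [ENNReal.mul_rpow_of_nonneg _ _ ht.le, mul_left_comm]

lemma lintegral_mul_dyadicMass_rpow_le (μ : Measure (Euc N)) [SFinite μ] (h : j ≤ k)
    (g : (Fin N → ℤ) → ℝ≥0∞) {t : ℝ} (ht : 0 < t) :
    ∫⁻ x, g (dyadicIndex k x) * dyadicMass μ j x ^ t ≤
      (3 ^ N + 1) * 2 ^ (((j : ℝ) - k) * (N * min 1 t)) *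
        ∫⁻ x, g (dyadicIndex k x) * dyadicMass μ k x ^ t := by
  rcases le_total 1 t with h1 | h1
  · rw [min_eq_left h1, mul_one]
    refine (lintegral_mul_dyadicMass_rpow_le_of_one_le μ h g h1).trans ?_
    gcongr
    exact le_self_add
  · rw [min_eq_right h1]
    exact lintegral_mul_dyadicMass_rpow_le_of_le_one μ h g ht h1

end Averaging

section DyadicTerm

variable {N : ℕ}

/-- The filtration of the dyadic cubes of side `2 ^ k`, `2 ^ (k - 1)`, `2 ^ (k - 2)`, …: time runs
towards finer scales. -/
def dyadicFiltration (k : ℤ) : Filtration ℕ (inferInstance : MeasurableSpace (Euc N)) where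
  seq n := MeasurableSpace.comap (dyadicIndex (k - n)) inferInstance
  mono' m n h := by
    obtain ⟨φ, hφ⟩ := exists_dyadicIndex_eq_comp (N := N) (j := k - n) (k := k - m) (by omega)
    refine Measurable.comap_le ?_
    rw [hφ]
    exact Measurable.of_discrete.comp (comap_measurable _)
  le' n := (measurable_dyadicIndex _).comap_le

/-- The contribution of the scale `2 ^ k` to a Wolff potential: `(μ(Q) / ℓ ^ D) ^ s`, where
`ℓ = 2 ^ k` and `Q = dyadicNhd k x`. -/
def dyadicTerm (μ : Measure (Euc N)) (D s : ℝ) (k : ℤ) (x : Euc N) : ℝ≥0∞ :=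
  (dyadicMass μ k x / ENNReal.ofReal (((2 : ℝ) ^ k) ^ D)) ^ s

variable {μ : Measure (Euc N)} {D s r : ℝ} {j k : ℤ}

lemma dyadicTerm_eq (hs : 0 ≤ s) (x : Euc N) :
    dyadicTerm μ D s k x = 2 ^ (-(k * (D * s))) * dyadicMass μ k x ^ s := by
  have h2 : (0 : ℝ) < 2 ^ k := by positivity
  rw [dyadicTerm, ENNReal.div_rpow_of_nonneg _ _ hs, ← ENNReal.ofReal_rpow_of_pos h2,
    ennreal_ofReal_two_zpow, ← ENNReal.rpow_mul, ← ENNReal.rpow_mul, ENNReal.rpow_neg,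
    ENNReal.div_eq_inv_mul]

lemma dyadicTerm_rpow (x : Euc N) : dyadicTerm μ D s k x ^ r = dyadicTerm μ D (s * r) k x :=
  (ENNReal.rpow_mul _ _ _).symm

lemma dyadicTerm_eq_mul {D' : ℝ} (hs : 0 ≤ s) (x : Euc N) :
    dyadicTerm μ D' s k x = 2 ^ (k * ((D - D') * s)) * dyadicTerm μ D s k x := by
  have hexp : -(k * (D' * s)) = k * ((D - D') * s) + -(k * (D * s)) := by ring
  rw [dyadicTerm_eq hs, dyadicTerm_eq hs, hexp, ennreal_two_rpow_add, mul_assoc (2 ^ _)]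

lemma dyadicTerm_le (hs : 0 ≤ s) (h : j ≤ k) (x : Euc N) :
    dyadicTerm μ D s j x ≤ 2 ^ (((k : ℝ) - j) * (D * s)) * dyadicTerm μ D s k x := by
  have hexp : -(j * (D * s)) = ((k : ℝ) - j) * (D * s) + -(k * (D * s)) := by ring
  rw [dyadicTerm_eq hs, dyadicTerm_eq hs, hexp, ennreal_two_rpow_add, mul_assoc (2 ^ _)]
  gcongr
  exact dyadicMass_mono μ h x

lemma adapted_dyadicTerm (μ : Measure (Euc N)) (D s : ℝ) (k : ℤ) :
    Adapted (dyadicFiltration k) fun n => dyadicTerm μ D s (k - n) := fun n =>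
  (Measurable.of_discrete (f := fun z => (μ (dyadicIndex (k - n) ⁻¹' Icc (z - 1) (z + 1)) /
    ENNReal.ofReal (((2 : ℝ) ^ (k - n : ℤ)) ^ D)) ^ s)).comp (comap_measurable _)

@[fun_prop]
lemma measurable_dyadicTerm (μ : Measure (Euc N)) (D s : ℝ) (k : ℤ) :
    Measurable (dyadicTerm μ D s k) :=
  ((measurable_dyadicMass μ k).div_const _).pow_const _

lemma lintegral_mul_dyadicTerm_rpow_le (μ : Measure (Euc N)) [SFinite μ] (D : ℝ) (hs : 0 < s)
    (hr : 0 < r) (h : j ≤ k) (g : (Fin N → ℤ) → ℝ≥0∞) :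
    ∫⁻ x, g (dyadicIndex k x) * dyadicTerm μ D s j x ^ r ≤
      (3 ^ N + 1) * 2 ^ (((j : ℝ) - k) * (N * min 1 (s * r) - D * (s * r))) *
        ∫⁻ x, g (dyadicIndex k x) * dyadicTerm μ D s k x ^ r := by
  have hsr : 0 < s * r := mul_pos hs hr
  have hpull (i : ℤ) : ∫⁻ x, g (dyadicIndex k x) * dyadicTerm μ D s i x ^ r =
      2 ^ (-(i * (D * (s * r)))) * ∫⁻ x, g (dyadicIndex k x) * dyadicMass μ i x ^ (s * r) := by
    rw [← lintegral_const_mul' _ _ (by finiteness)]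
    congr! 2 with x
    rw [dyadicTerm_rpow, dyadicTerm_eq hsr.le, mul_left_comm]
  have hscale : (2 : ℝ≥0∞) ^ (-(j * (D * (s * r)))) * 2 ^ (((j : ℝ) - k) * (N * min 1 (s * r))) =
      2 ^ (((j : ℝ) - k) * (N * min 1 (s * r) - D * (s * r))) * 2 ^ (-(k * (D * (s * r)))) := by
    rw [← ennreal_two_rpow_add, ← ennreal_two_rpow_add]
    ring_nf
  rw [hpull j, hpull k]
  set I := ∫⁻ x, g (dyadicIndex k x) * dyadicMass μ k x ^ (s * r)
  calc _ ≤ 2 ^ (-(j * (D * (s * r)))) *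
        ((3 ^ N + 1) * 2 ^ (((j : ℝ) - k) * (N * min 1 (s * r))) * I) := by
        gcongr
        exact lintegral_mul_dyadicMass_rpow_le μ h g hsr
    _ = (3 ^ N + 1) * (2 ^ (-(j * (D * (s * r)))) *
          2 ^ (((j : ℝ) - k) * (N * min 1 (s * r)))) * I := by ring
    _ = _ := by rw [hscale]; ring

lemma exists_tailsDominated_dyadicTerm (N : ℕ) (hs : 0 < s) (hr : 0 < r) (hD : D < N)
    (hD' : D * (s * r) < N) :
    ∃ K ≠ (⊤ : ℝ≥0∞), ∀ (μ : Measure (Euc N)) [SFinite μ] (k : ℤ),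
      TailsDominated volume (dyadicFiltration k) (fun n => dyadicTerm μ D s (k - n)) r K := by
  have hsr : 0 < s * r := mul_pos hs hr
  have hε : 0 < N * min 1 (s * r) - D * (s * r) := by
    rw [sub_pos]
    rcases le_total 1 (s * r) with h | h
    · rwa [min_eq_left h, mul_one]
    · rw [min_eq_right h]; exact mul_lt_mul_of_pos_right hD hsr
  obtain ⟨K, hK, h⟩ := exists_tailsDominated_of_geometric (X := Euc N) hr hε
    (show (3 : ℝ≥0∞) ^ N + 1 ≠ ⊤ by finiteness)
  refine ⟨K, hK, fun μ _ k => h volume (dyadicFiltration k) _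
    (fun n => measurable_dyadicTerm μ D s _) fun n m d hd => ?_⟩
  obtain ⟨g, -, rfl⟩ := hd.exists_eq_measurable_comp
  have hexp : ((k - (n + m : ℕ) : ℤ) : ℝ) - ((k - n : ℤ) : ℝ) = -m := by push_cast; ring
  have := lintegral_mul_dyadicTerm_rpow_le μ D hs hr
    (j := k - (n + m : ℕ)) (k := k - n) (by push_cast; omega) g
  rwa [hexp, neg_mul] at this

end DyadicTerm

section DyadicSum

variable {N : ℕ} {D₁ D₂ s q₁ q₂ : ℝ}

lemma exists_sum_range_dyadicTerm_le (N : ℕ) (D : ℝ) (hs : 0 ≤ s) (L : ℕ) :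
    ∃ C ≠ (⊤ : ℝ≥0∞), ∀ (μ : Measure (Euc N)) (k : ℤ) (x : Euc N),
      ∑ n ∈ Finset.range L, dyadicTerm μ D s (k - n) x ≤ C * dyadicTerm μ D s k x := by
  refine ⟨∑ n ∈ Finset.range L, 2 ^ (n * (D * s)), ENNReal.sum_ne_top.2 fun n _ => by finiteness,
    fun μ k x => ?_⟩
  rw [Finset.sum_mul]
  refine Finset.sum_le_sum fun n _ => ?_
  simpa using dyadicTerm_le (μ := μ) (D := D) hs (show k - n ≤ k by omega) x

lemma lintegral_sum_range_dyadicTerm_ne_top (μ : Measure (Euc N)) (D₁ D₂ : ℝ) (hs : 0 ≤ s)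
    (hq₁ : 0 ≤ q₁) (hq₂ : 0 ≤ q₂) {k : ℤ} {L : ℕ}
    (h : ∫⁻ x, dyadicTerm μ D₁ s k x ^ q₁ * dyadicTerm μ D₂ s k x ^ q₂ ≠ ⊤) :
    ∫⁻ x, (∑ n ∈ Finset.range L, dyadicTerm μ D₁ s (k - n) x) ^ q₁ *
      (∑ n ∈ Finset.range L, dyadicTerm μ D₂ s (k - n) x) ^ q₂ ≠ ⊤ := by
  obtain ⟨C₁, hC₁, h₁⟩ := exists_sum_range_dyadicTerm_le N D₁ hs L
  obtain ⟨C₂, hC₂, h₂⟩ := exists_sum_range_dyadicTerm_le N D₂ hs L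
  have hC : C₁ ^ q₁ * C₂ ^ q₂ ≠ ⊤ := by finiteness
  refine ne_top_of_le_ne_top (ENNReal.mul_ne_top hC h) ?_
  rw [← lintegral_const_mul' _ _ hC]
  refine lintegral_mono fun x => ?_
  calc _ ≤ (C₁ * dyadicTerm μ D₁ s k x) ^ q₁ * (C₂ * dyadicTerm μ D₂ s k x) ^ q₂ := by
        gcongr
        exacts [h₁ μ k x, h₂ μ k x]
    _ = _ := by
        rw [ENNReal.mul_rpow_of_nonneg _ _ hq₁, ENNReal.mul_rpow_of_nonneg _ _ hq₂]
        ring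

lemma exists_lintegral_sum_range_dyadicTerm_le (N : ℕ) (hs : 0 < s) (hq₁ : 0 < q₁) (hq₂ : 0 < q₂)
    (hD : D₁ ≤ D₂) (hD₂ : D₂ < N) (hDq : D₂ * (s * q₂) < N) :
    ∃ C ≠ (⊤ : ℝ≥0∞), ∀ (μ : Measure (Euc N)) [SFinite μ] (M : Euc N → ℝ≥0∞),
      (∀ k x, dyadicTerm μ D₁ s k x ^ q₁ * dyadicTerm μ D₂ s k x ^ q₂ ≤ M x) → ∀ (k : ℤ) (L : ℕ),
        ∫⁻ x, (∑ n ∈ Finset.range L, dyadicTerm μ D₁ s (k - n) x) ^ q₁ *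
          (∑ n ∈ Finset.range L, dyadicTerm μ D₂ s (k - n) x) ^ q₂ ≤ C * ∫⁻ x, M x := by
  obtain ⟨θ, hθ, hθ1, hθq, hsθ⟩ : ∃ θ : ℝ, 0 < θ ∧ θ ≤ 1 ∧ θ < q₁ ∧ s * θ ≤ 1 := by
    refine ⟨min 1 (min (q₁ / 2) s⁻¹), by positivity, min_le_left _ _, ?_, ?_⟩
    · exact ((min_le_right _ _).trans (min_le_left _ _)).trans_lt (half_lt_self hq₁)
    · rw [← le_inv_mul_iff₀ hs, mul_one]
      exact (min_le_right _ _).trans (min_le_right _ _)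
  have hD₁ : D₁ < N := hD.trans_lt hD₂
  have hD₁θ : D₁ * (s * θ * 1) < N := by
    rw [mul_one]
    calc D₁ * (s * θ) < N * (s * θ) := by gcongr
      _ ≤ N := mul_le_of_le_one_right N.cast_nonneg hsθ
  obtain ⟨K₁, hK₁, h₁⟩ := exists_tailsDominated_dyadicTerm N (mul_pos hs hθ) one_pos hD₁ hD₁θ
  obtain ⟨K₂, hK₂, h₂⟩ := exists_tailsDominated_dyadicTerm N hs hq₂ hD₂ hDq
  obtain ⟨C, hC, h⟩ := exists_lintegral_sum_rpow_mul_sum_rpow_le (volume : Measure (Euc N)) hθ hθ1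
    hθq hq₂.le hK₁ hK₂
  refine ⟨C + 1, by finiteness, fun μ _ M hM k L => ?_⟩
  rcases eq_or_ne (∫⁻ x, M x) ⊤ with htop | htop
  · simp [htop]
  refine (h (dyadicFiltration k) (fun n => dyadicTerm μ D₁ s (k - n))
    (fun n => dyadicTerm μ D₂ s (k - n)) (fun n _ => 2 ^ ((k - n : ℤ) * ((D₁ - D₂) * s))) M L
    (adapted_dyadicTerm μ D₁ s k) (adapted_dyadicTerm μ D₂ s k) (fun m n hmn _ => ?_)
    (fun n x => dyadicTerm_eq_mul hs.le x) ?_ (h₂ μ k) (fun n _ x => hM _ x) ?_).trans ?_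
  · refine ENNReal.rpow_le_rpow_of_exponent_le one_le_two (mul_le_mul_of_nonpos_right ?_ ?_)
    · exact_mod_cast (by omega : k - n ≤ k - m)
    · exact mul_nonpos_of_nonpos_of_nonneg (sub_nonpos.2 hD) hs.le
  · simpa only [dyadicTerm_rpow] using h₁ μ k
  · exact lintegral_sum_range_dyadicTerm_ne_top μ D₁ D₂ hs.le hq₁.le hq₂.le
      (ne_top_of_le_ne_top htop (lintegral_mono (hM k)))
  · gcongr
    exact le_self_add

lemma sum_Icc_neg_eq_sum_range {G : Type*} [AddCommMonoid G] (f : ℤ → G) (m : ℕ) :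
    ∑ k ∈ Finset.Icc (-m : ℤ) m, f k = ∑ n ∈ Finset.range (2 * m + 1), f (m - n) := by
  refine (Finset.sum_nbij (fun n : ℕ => (m - n : ℤ)) ?_ ?_ ?_ fun _ _ => rfl).symm
  · intro n hn
    simp only [Finset.mem_range, Finset.mem_Icc] at hn ⊢
    omega
  · intro n _ n' _ h
    simpa using h
  · intro k hk
    simp only [Finset.coe_Icc, mem_Icc, Finset.coe_range, mem_image, mem_Iio] at hk ⊢
    exact ⟨(m - k).toNat, by omega, by omega⟩

theorem exists_lintegral_tsum_dyadicTerm_le (N : ℕ) (hs : 0 < s) (hq₁ : 0 < q₁) (hq₂ : 0 < q₂)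
    (hD : D₁ ≤ D₂) (hD₂ : D₂ < N) (hDq : D₂ * (s * q₂) < N) :
    ∃ C ≠ (⊤ : ℝ≥0∞), ∀ (μ : Measure (Euc N)) [SFinite μ] (M : Euc N → ℝ≥0∞),
      (∀ k x, dyadicTerm μ D₁ s k x ^ q₁ * dyadicTerm μ D₂ s k x ^ q₂ ≤ M x) →
        ∫⁻ x, (∑' k, dyadicTerm μ D₁ s k x) ^ q₁ * (∑' k, dyadicTerm μ D₂ s k x) ^ q₂ ≤
          C * ∫⁻ x, M x := by
  obtain ⟨C, hC, h⟩ := exists_lintegral_sum_range_dyadicTerm_le N hs hq₁ hq₂ hD hD₂ hDq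
  refine ⟨C, hC, fun μ _ M hM => lintegral_tsum_rpow_mul_tsum_rpow_le
    (t := fun m : ℕ => Finset.Icc (-m : ℤ) m) (fun m n hmn => ?_)
    (fun k => ⟨k.natAbs, by rw [Finset.mem_Icc]; omega⟩) (measurable_dyadicTerm μ D₁ s)
    (measurable_dyadicTerm μ D₂ s) hq₁ hq₂ fun m => ?_⟩
  · exact Finset.Icc_subset_Icc (by omega) (by omega)
  · simp only [sum_Icc_neg_eq_sum_range]
    exact h μ M hM m _

end DyadicSum

section Weights

variable {t D D₁ D₂ r r₁ r₂ : ℝ}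

lemma div_ofReal_rpow (ht : 0 < t) (m : ℝ≥0∞) (D : ℝ) (hr : 0 ≤ r) :
    (m / ENNReal.ofReal (t ^ D)) ^ r = m ^ r * ENNReal.ofReal t ^ (-(D * r)) := by
  rw [ENNReal.div_rpow_of_nonneg _ _ hr, ← ENNReal.ofReal_rpow_of_pos ht, ← ENNReal.rpow_mul,
    ENNReal.rpow_neg, ENNReal.div_eq_inv_mul, mul_comm]

lemma div_ofReal_rpow_eq_mul {c : ℝ} (hc : 0 < c) (ht : 0 < t) (m : ℝ≥0∞) (D : ℝ) (hr : 0 ≤ r) :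
    (m / ENNReal.ofReal (t ^ D)) ^ r =
      ENNReal.ofReal c ^ (D * r) * (m / ENNReal.ofReal ((t * c) ^ D)) ^ r := by
  have hc0 : ENNReal.ofReal c ≠ 0 := by simpa using hc
  have ht0 : ENNReal.ofReal t ≠ 0 := by simpa using ht
  have hcancel : ENNReal.ofReal c ^ (D * r) * ENNReal.ofReal c ^ (-(D * r)) = 1 := by
    rw [← ENNReal.rpow_add _ _ hc0 ENNReal.ofReal_ne_top, add_neg_cancel, ENNReal.rpow_zero]
  rw [div_ofReal_rpow ht _ _ hr, div_ofReal_rpow (mul_pos ht hc) _ _ hr,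
    ENNReal.ofReal_mul ht.le, ENNReal.mul_rpow_of_ne_zero ht0 hc0, mul_left_comm,
    mul_left_comm (ENNReal.ofReal c ^ _), hcancel, mul_one]

lemma div_ofReal_rpow_mul_div_ofReal_rpow (ht : 0 < t) (m : ℝ≥0∞) (hr₁ : 0 ≤ r₁) (hr₂ : 0 ≤ r₂)
    (h : D₁ * r₁ + D₂ * r₂ = D * (r₁ + r₂)) :
    (m / ENNReal.ofReal (t ^ D₁)) ^ r₁ * (m / ENNReal.ofReal (t ^ D₂)) ^ r₂ =
      (m / ENNReal.ofReal (t ^ D)) ^ (r₁ + r₂) := by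
  have ht0 : ENNReal.ofReal t ≠ 0 := by simpa using ht
  rw [div_ofReal_rpow ht _ _ hr₁, div_ofReal_rpow ht _ _ hr₂,
    div_ofReal_rpow ht _ _ (add_nonneg hr₁ hr₂), mul_mul_mul_comm,
    ← ENNReal.rpow_add_of_nonneg _ _ hr₁ hr₂, ← ENNReal.rpow_add _ _ ht0 ENNReal.ofReal_ne_top,
    ← neg_add, h]

end Weights

section Wolff

variable {N : ℕ} {α β g p q₁ q₂ : ℝ}

lemma wolff_top (α p : ℝ) (μ : Measure (Euc N)) (x : Euc N) :
    wolff α p ⊤ μ x = ∫⁻ ρ in Ioi 0,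
      (μ (ball x ρ) / ENNReal.ofReal (ρ ^ (N - α * p))) ^ (1 / (p - 1)) / ENNReal.ofReal ρ := by
  simp only [wolff, ENNReal.ofReal_lt_top, and_true, Ioi]

lemma div_rpow_le_fracMax_top (g : ℝ) (μ : Measure (Euc N)) (x : Euc N) {t : ℝ} (ht : 0 < t) :
    μ (ball x t) / ENNReal.ofReal (t ^ (N - g)) ≤ fracMax g ⊤ μ x :=
  le_iSup₂_of_le t ht (le_iSup_of_le ENNReal.ofReal_lt_top le_rfl)

theorem wolff_top_le_tsum_dyadicTerm (hp : 1 ≤ p) (hα : 0 ≤ N - α * p) (μ : Measure (Euc N))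
    (x : Euc N) :
    wolff α p ⊤ μ x ≤ 2 ^ ((N - α * p) * (1 / (p - 1))) *
      ∑' k, dyadicTerm μ (N - α * p) (1 / (p - 1)) k x := by
  set s := 1 / (p - 1)
  set D := N - α * p
  have hs : 0 ≤ s := one_div_nonneg.2 (by linarith)
  have hcover : Ioi (0 : ℝ) ⊆ ⋃ k : ℤ, Ico (2 ^ k) (2 ^ (k + 1)) := fun ρ hρ =>
    mem_iUnion.2 (exists_mem_Ico_zpow hρ one_lt_two)
  rw [wolff_top, ← (Equiv.addRight (1 : ℤ)).tsum_eq, ← ENNReal.tsum_mul_left]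
  refine (lintegral_mono_set hcover).trans ((lintegral_iUnion_le _ _).trans
    (ENNReal.tsum_le_tsum fun k => ?_))
  have hk : (0 : ℝ) < 2 ^ k := by positivity
  have hsucc : (2 : ℝ) ^ (k + 1) = 2 ^ k * 2 := zpow_add_one₀ two_ne_zero k
  calc ∫⁻ ρ in Ico (2 ^ k) (2 ^ (k + 1)),
        (μ (ball x ρ) / ENNReal.ofReal (ρ ^ D)) ^ s / ENNReal.ofReal ρ
      ≤ ∫⁻ _ in Ico ((2 : ℝ) ^ k) (2 ^ (k + 1)),
        (dyadicMass μ (k + 1) x / ENNReal.ofReal ((2 ^ k) ^ D)) ^ s / ENNReal.ofReal (2 ^ k) := by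
        refine setLIntegral_mono measurable_const fun ρ ⟨hkρ, hρk⟩ => ?_
        have hmass : μ (ball x ρ) ≤ dyadicMass μ (k + 1) x :=
          measure_mono ((ball_subset_ball hρk.le).trans (ball_subset_dyadicNhd (k + 1) x))
        gcongr
    _ = (dyadicMass μ (k + 1) x / ENNReal.ofReal ((2 ^ k) ^ D)) ^ s := by
        rw [setLIntegral_const, Real.volume_Ico, hsucc, mul_two, add_sub_cancel_right,
          ENNReal.div_mul_cancel (by simpa using hk) ENNReal.ofReal_ne_top]
    _ = 2 ^ (D * s) * dyadicTerm μ D s (k + 1) x := by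
        rw [div_ofReal_rpow_eq_mul two_pos hk _ _ hs, dyadicTerm, hsucc, ENNReal.ofReal_ofNat]

lemma div_rpow_le_wolff_top (hp : 1 ≤ p) (hα : 0 ≤ N - α * p) (μ : Measure (Euc N)) (x : Euc N)
    {t : ℝ} (ht : 0 < t) :
    (μ (ball x t) / ENNReal.ofReal (t ^ (N - α * p))) ^ (1 / (p - 1)) ≤
      2 ^ ((N - α * p) * (1 / (p - 1))) * 2 * wolff α p ⊤ μ x := by
  set s := 1 / (p - 1)
  set D := N - α * p
  have hs : 0 ≤ s := one_div_nonneg.2 (by linarith)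
  have ht2 : ENNReal.ofReal (t * 2) = 2 * ENNReal.ofReal t := by
    rw [ENNReal.ofReal_mul ht.le, ENNReal.ofReal_ofNat, mul_comm]
  set T := (μ (ball x t) / ENNReal.ofReal ((t * 2) ^ D)) ^ s
  suffices hT : T ≤ 2 * wolff α p ⊤ μ x by
    rw [div_ofReal_rpow_eq_mul two_pos ht _ _ hs, ENNReal.ofReal_ofNat, mul_assoc]
    gcongr
  calc T = 2 * ∫⁻ _ in Ico t (t * 2), T / ENNReal.ofReal (t * 2) := by
        rw [setLIntegral_const, Real.volume_Ico, mul_two, add_sub_cancel_right, ← mul_two,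
          mul_left_comm, ← ht2, ENNReal.div_mul_cancel (by simpa using ht) ENNReal.ofReal_ne_top]
    _ ≤ 2 * ∫⁻ ρ in Ico t (t * 2),
          (μ (ball x ρ) / ENNReal.ofReal (ρ ^ D)) ^ s / ENNReal.ofReal ρ := by
        gcongr 2 * ?_
        refine setLIntegral_mono' measurableSet_Ico fun ρ ⟨htρ, hρt⟩ => ?_
        have hρ : 0 < ρ := ht.trans_le htρ
        dsimp only [T]
        gcongr
    _ ≤ 2 * wolff α p ⊤ μ x := by
        rw [wolff_top]
        gcongr
        exact fun ρ hρ => ht.trans_le hρ.1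

theorem fracMax_top_rpow_le (hp : 1 < p) (hα : 0 ≤ N - α * p) (hβ : 0 ≤ N - β * p) (hq₁ : 0 < q₁)
    (hq₂ : 0 < q₂) (hg : (q₁ + q₂) * g = (α * q₁ + β * q₂) * p) (μ : Measure (Euc N))
    (x : Euc N) :
    fracMax g ⊤ μ x ^ ((q₁ + q₂) / (p - 1)) ≤
      (2 ^ ((N - α * p) * (1 / (p - 1))) * 2) ^ q₁ *
        (2 ^ ((N - β * p) * (1 / (p - 1))) * 2) ^ q₂ *
          (wolff α p ⊤ μ x ^ q₁ * wolff β p ⊤ μ x ^ q₂) := by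
  have hαx {t : ℝ} (ht : 0 < t) := div_rpow_le_wolff_top hp.le hα μ x ht
  have hβx {t : ℝ} (ht : 0 < t) := div_rpow_le_wolff_top hp.le hβ μ x ht
  have hs : 0 < 1 / (p - 1) := one_div_pos.2 (sub_pos.2 hp)
  have hqs : (q₁ + q₂) / (p - 1) = 1 / (p - 1) * q₁ + 1 / (p - 1) * q₂ := by ring
  set s := 1 / (p - 1)
  rw [hqs, ← ENNReal.le_rpow_inv_iff (by positivity)]
  refine iSup₂_le fun t ht => iSup_le fun _ => ?_
  rw [ENNReal.le_rpow_inv_iff (by positivity),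
    ← div_ofReal_rpow_mul_div_ofReal_rpow (D₁ := N - α * p) (D₂ := N - β * p) ht _
      (by positivity) (by positivity) (by linear_combination s * hg), ENNReal.rpow_mul,
    ENNReal.rpow_mul, mul_mul_mul_comm, ← ENNReal.mul_rpow_of_nonneg _ _ hq₁.le,
    ← ENNReal.mul_rpow_of_nonneg _ _ hq₂.le]
  gcongr
  exacts [hαx ht, hβx ht]

lemma dyadicTerm_rpow_mul_dyadicTerm_rpow_le_fracMax (hp : 1 ≤ p) (hq₁ : 0 ≤ q₁) (hq₂ : 0 ≤ q₂)
    (hg : (q₁ + q₂) * g = (α * q₁ + β * q₂) * p) (μ : Measure (Euc N)) (k : ℤ) (x : Euc N) :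
    dyadicTerm μ (N - α * p) (1 / (p - 1)) k x ^ q₁ *
        dyadicTerm μ (N - β * p) (1 / (p - 1)) k x ^ q₂ ≤
      ENNReal.ofReal (2 * N + 1) ^ ((N - g) * ((q₁ + q₂) / (p - 1))) *
        fracMax g ⊤ μ x ^ ((q₁ + q₂) / (p - 1)) := by
  have hs : 0 ≤ 1 / (p - 1) := one_div_nonneg.2 (sub_nonneg.2 hp)
  have hqs : (q₁ + q₂) / (p - 1) = 1 / (p - 1) * q₁ + 1 / (p - 1) * q₂ := by ring
  set s := 1 / (p - 1)
  have hc : (0 : ℝ) < 2 * N + 1 := by positivity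
  have hk : (0 : ℝ) < 2 ^ k := by positivity
  rw [hqs, dyadicTerm_rpow, dyadicTerm_rpow, dyadicTerm, dyadicTerm,
    div_ofReal_rpow_mul_div_ofReal_rpow (D := N - g) hk _ (by positivity) (by positivity)
      (by linear_combination s * hg), div_ofReal_rpow_eq_mul hc hk _ _ (by positivity)]
  gcongr
  refine le_trans ?_ (div_rpow_le_fracMax_top g μ x (mul_pos hk hc))
  gcongr
  rw [mul_comm]
  exact measure_mono (dyadicNhd_subset_ball k x)

end Wolff

section DominatedOn

variable {ι : Type*} {S : Set ι} {f g h : ι → ℝ≥0∞}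

/-- The relation `f ≲ g` on `S`: a finite multiple of `g` dominates `f`, with one constant for all
points of `S`. -/
def DominatedOn (S : Set ι) (f g : ι → ℝ≥0∞) : Prop :=
  ∃ C ≠ ⊤, ∀ i ∈ S, f i ≤ C * g i

lemma DominatedOn.trans (hfg : DominatedOn S f g) (hgh : DominatedOn S g h) :
    DominatedOn S f h := by
  obtain ⟨C, hC, hfg⟩ := hfg
  obtain ⟨C', hC', hgh⟩ := hgh
  refine ⟨C * C', by finiteness, fun i hi => (hfg i hi).trans ?_⟩
  rw [mul_assoc]
  gcongr
  exact hgh i hi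

lemma DominatedOn.eventually_le (hfg : DominatedOn S f g) :
    ∀ᶠ C : ℝ in atTop, ∀ i ∈ S, f i ≤ ENNReal.ofReal C * g i := by
  obtain ⟨C, hC, hfg⟩ := hfg
  filter_upwards [eventually_ge_atTop C.toReal] with C' hC' i hi
  refine (hfg i hi).trans ?_
  gcongr
  exact (ENNReal.le_ofReal_iff_toReal_le hC (ENNReal.toReal_nonneg.trans hC')).2 hC'

lemma exists_pairwise_le_of_dominatedOn (hfg : DominatedOn S f g) (hgf : DominatedOn S g f)
    (hfh : DominatedOn S f h) (hhf : DominatedOn S h f) :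
    ∃ C > 0, ∀ i ∈ S,
      f i ≤ ENNReal.ofReal C * g i ∧ g i ≤ ENNReal.ofReal C * f i ∧
      g i ≤ ENNReal.ofReal C * h i ∧ h i ≤ ENNReal.ofReal C * g i ∧
      f i ≤ ENNReal.ofReal C * h i ∧ h i ≤ ENNReal.ofReal C * f i := by
  obtain ⟨C, hC, h₁, h₂, h₃, h₄, h₅, h₆⟩ := ((eventually_gt_atTop 0).and
    (hfg.eventually_le.and (hgf.eventually_le.and ((hgf.trans hfh).eventually_le.and
      ((hhf.trans hfg).eventually_le.and (hfh.eventually_le.and hhf.eventually_le)))))).exists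
  exact ⟨C, hC, fun i hi => ⟨h₁ i hi, h₂ i hi, h₃ i hi, h₄ i hi, h₅ i hi, h₆ i hi⟩⟩

end DominatedOn

section Comparison

variable {N : ℕ} {α β g p q q₁ q₂ : ℝ}

theorem dominatedOn_lintegral_fracMax_wolff_mul_wolff (S : Set (Measure (Euc N))) (hp : 1 < p)
    (hα : 0 ≤ N - α * p) (hβ : 0 ≤ N - β * p) (hq₁ : 0 < q₁) (hq₂ : 0 < q₂)
    (hg : (q₁ + q₂) * g = (α * q₁ + β * q₂) * p) :
    DominatedOn S (fun μ => ∫⁻ x, fracMax g ⊤ μ x ^ ((q₁ + q₂) / (p - 1)))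
      (fun μ => ∫⁻ x, wolff α p ⊤ μ x ^ q₁ * wolff β p ⊤ μ x ^ q₂) := by
  refine ⟨_, ?_, fun μ _ => (lintegral_mono
    (fracMax_top_rpow_le hp hα hβ hq₁ hq₂ hg μ)).trans_eq (lintegral_const_mul' _ _ ?_)⟩ <;>
    finiteness

theorem dominatedOn_lintegral_wolff_mul_wolff_fracMax (hp : 1 < p) (hα : 0 ≤ N - α * p)
    (hβ : 0 < β) (hβα : β ≤ α) (hq₁ : 0 < q₁) (hq₂ : 0 < q₂)
    (hβq : (N - β * p) * q₂ < N * (p - 1)) (hg : (q₁ + q₂) * g = (α * q₁ + β * q₂) * p) :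
    DominatedOn {μ : Measure (Euc N) | SFinite μ}
      (fun μ => ∫⁻ x, wolff α p ⊤ μ x ^ q₁ * wolff β p ⊤ μ x ^ q₂)
      (fun μ => ∫⁻ x, fracMax g ⊤ μ x ^ ((q₁ + q₂) / (p - 1))) := by
  have hp0 : 0 < p - 1 := sub_pos.2 hp
  have hβαp : β * p ≤ α * p := by gcongr
  have hβp : 0 < β * p := by positivity
  have hDq : (N - β * p) * (1 / (p - 1) * q₂) < N := by
    rw [one_div_mul_eq_div, mul_div_assoc', div_lt_iff₀ hp0]
    exact hβq
  obtain ⟨C, hC, hM⟩ := exists_lintegral_tsum_dyadicTerm_le N (one_div_pos.2 hp0) hq₁ hq₂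
    (sub_le_sub_left hβαp _) (sub_lt_self _ hβp) hDq
  have hαx := wolff_top_le_tsum_dyadicTerm hp.le hα
  have hβx := wolff_top_le_tsum_dyadicTerm hp.le (hα.trans (sub_le_sub_left hβαp _))
  set A : ℝ≥0∞ := 2 ^ ((N - α * p) * (1 / (p - 1)))
  set B : ℝ≥0∞ := 2 ^ ((N - β * p) * (1 / (p - 1)))
  set c := ENNReal.ofReal (2 * N + 1) ^ ((N - g) * ((q₁ + q₂) / (p - 1)))
  have hA : A ^ q₁ * B ^ q₂ ≠ ⊤ := by finiteness
  have hc : c ≠ ⊤ := ENNReal.rpow_ne_top_of_ne_zero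
    (ENNReal.ofReal_pos.2 (by positivity)).ne' ENNReal.ofReal_ne_top
  refine ⟨A ^ q₁ * B ^ q₂ * (C * c), by finiteness, fun μ (_ : SFinite μ) => ?_⟩
  calc ∫⁻ x, wolff α p ⊤ μ x ^ q₁ * wolff β p ⊤ μ x ^ q₂
      ≤ ∫⁻ x, A ^ q₁ * B ^ q₂ * ((∑' k, dyadicTerm μ (N - α * p) (1 / (p - 1)) k x) ^ q₁ *
          (∑' k, dyadicTerm μ (N - β * p) (1 / (p - 1)) k x) ^ q₂) := by
        refine lintegral_mono fun x => ?_
        rw [mul_mul_mul_comm, ← ENNReal.mul_rpow_of_nonneg _ _ hq₁.le,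
          ← ENNReal.mul_rpow_of_nonneg _ _ hq₂.le]
        gcongr
        exacts [hαx μ x, hβx μ x]
    _ ≤ A ^ q₁ * B ^ q₂ * (C * ∫⁻ x, c * fracMax g ⊤ μ x ^ ((q₁ + q₂) / (p - 1))) := by
        rw [lintegral_const_mul' _ _ hA]
        gcongr
        exact hM μ _ (dyadicTerm_rpow_mul_dyadicTerm_rpow_le_fracMax hp.le hq₁.le hq₂.le hg μ)
    _ = _ := by
        rw [lintegral_const_mul' _ _ hc]
        ring

theorem dominatedOn_lintegral_fracMax_wolff (S : Set (Measure (Euc N))) (hp : 1 < p)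
    (hα : 0 ≤ N - α * p) (hq : 0 < q) :
    DominatedOn S (fun μ => ∫⁻ x, fracMax (α * p) ⊤ μ x ^ (q / (p - 1)))
      (fun μ => ∫⁻ x, wolff α p ⊤ μ x ^ q) := by
  have h := dominatedOn_lintegral_fracMax_wolff_mul_wolff S hp hα hα (half_pos hq) (half_pos hq)
    (g := α * p) (by ring)
  simpa only [← ENNReal.rpow_add_of_nonneg _ _ (half_pos hq).le (half_pos hq).le, add_halves]
    using h

theorem dominatedOn_lintegral_wolff_fracMax (hp : 1 < p) (hα : 0 < α) (hαp : 0 < N - α * p)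
    (hq : 0 < q) :
    DominatedOn {μ : Measure (Euc N) | SFinite μ} (fun μ => ∫⁻ x, wolff α p ⊤ μ x ^ q)
      (fun μ => ∫⁻ x, fracMax (α * p) ⊤ μ x ^ (q / (p - 1))) := by
  have hN : 0 < N * (p - 1) := by
    have : 0 < α * p := by positivity
    exact mul_pos (by linarith) (sub_pos.2 hp)
  obtain ⟨r, hr, hrq⟩ := exists_between (lt_min hq (div_pos hN hαp))
  rw [lt_min_iff, lt_div_iff₀' hαp] at hrq
  have h := dominatedOn_lintegral_wolff_mul_wolff_fracMax hp hαp.le hα le_rfl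
    (sub_pos.2 hrq.1) hr hrq.2 (g := α * p) (by ring)
  simpa only [← ENNReal.rpow_add_of_nonneg _ _ (sub_pos.2 hrq.1).le hr.le, sub_add_cancel] using h

end Comparison

theorem stmt9_general (N : ℕ) (α β p q1 q2 : ℝ) (hβ : 0 < β) (hq1 : 0 < q1) (hq2 : 0 < q2)
    (hβα : β ≤ α) (hp : 1 < p) (hpN : p < (N : ℝ) / α)
    (hq2' : q2 < (N : ℝ) * (p - 1) / ((N : ℝ) - β * p)) :
    ∃ C > 0, ∀ μ : Measure (Euc N), SFinite μ →
      ((∫⁻ x, (fracMax ((α * p * q1 + β * p * q2) / (q1 + q2)) ⊤ μ x) ^ ((q1 + q2) / (p - 1))) ≤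
          ENNReal.ofReal C *
            ∫⁻ x, (wolff ((α * q1 + β * q2) / (q1 + q2)) p ⊤ μ x) ^ (q1 + q2)) ∧
      ((∫⁻ x, (wolff ((α * q1 + β * q2) / (q1 + q2)) p ⊤ μ x) ^ (q1 + q2)) ≤
          ENNReal.ofReal C *
            ∫⁻ x, (fracMax ((α * p * q1 + β * p * q2) / (q1 + q2)) ⊤ μ x) ^ ((q1 + q2) / (p - 1))) ∧
      ((∫⁻ x, (wolff ((α * q1 + β * q2) / (q1 + q2)) p ⊤ μ x) ^ (q1 + q2)) ≤
          ENNReal.ofReal C *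
            ∫⁻ x, (wolff α p ⊤ μ x) ^ q1 * (wolff β p ⊤ μ x) ^ q2) ∧
      ((∫⁻ x, (wolff α p ⊤ μ x) ^ q1 * (wolff β p ⊤ μ x) ^ q2) ≤
          ENNReal.ofReal C *
            ∫⁻ x, (wolff ((α * q1 + β * q2) / (q1 + q2)) p ⊤ μ x) ^ (q1 + q2)) ∧
      ((∫⁻ x, (fracMax ((α * p * q1 + β * p * q2) / (q1 + q2)) ⊤ μ x) ^ ((q1 + q2) / (p - 1))) ≤
          ENNReal.ofReal C *
            ∫⁻ x, (wolff α p ⊤ μ x) ^ q1 * (wolff β p ⊤ μ x) ^ q2) ∧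
      ((∫⁻ x, (wolff α p ⊤ μ x) ^ q1 * (wolff β p ⊤ μ x) ^ q2) ≤
          ENNReal.ofReal C *
            ∫⁻ x,
              (fracMax ((α * p * q1 + β * p * q2) / (q1 + q2)) ⊤ μ x) ^ ((q1 + q2) / (p - 1))) := by
  have hα : 0 < α := hβ.trans_le hβα
  have hp0 : 0 < p := one_pos.trans hp
  have hαN : α * p < N := by rwa [lt_div_iff₀' hα] at hpN
  have hβN : β * p < N := lt_of_le_of_lt (by gcongr) hαN
  have hq : 0 < q1 + q2 := by positivity
  rw [lt_div_iff₀' (sub_pos.2 hβN)] at hq2'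
  set γ := (α * q1 + β * q2) / (q1 + q2) with hγ
  have hγq : (q1 + q2) * γ = α * q1 + β * q2 := mul_div_cancel₀ _ hq.ne'
  have hγp : (α * p * q1 + β * p * q2) / (q1 + q2) = γ * p := by rw [hγ]; ring
  have hγ0 : 0 < γ := by positivity
  have hγN : γ * p < N := by
    have hγα : γ ≤ α := by rw [hγ, div_le_iff₀ hq, mul_add]; gcongr
    exact lt_of_le_of_lt (by gcongr) hαN
  have hg : (q1 + q2) * (γ * p) = (α * q1 + β * q2) * p := by rw [← mul_assoc, hγq]
  rw [hγp]
  exact exists_pairwise_le_of_dominatedOn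
    (dominatedOn_lintegral_fracMax_wolff {μ | SFinite μ} hp (sub_pos.2 hγN).le hq)
    (dominatedOn_lintegral_wolff_fracMax hp hγ0 (sub_pos.2 hγN) hq)
    (dominatedOn_lintegral_fracMax_wolff_mul_wolff _ hp (sub_pos.2 hαN).le (sub_pos.2 hβN).le
      hq1 hq2 hg)
    (dominatedOn_lintegral_wolff_mul_wolff_fracMax hp (sub_pos.2 hαN).le hβ hβα hq1 hq2 hq2' hg)

/-- Comparability in `L^1(ℝ^N)` of the fractional maximal function,
the Wolff potential of intermediate order, and the product of Wolff potentials. -/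
theorem stmt9 (N : ℕ) (α β p q1 q2 : ℝ) (hα : 0 < α) (hβ : 0 < β)
    (hq1 : 0 < q1) (hq2 : 0 < q2) (hαβ : β < α) (hp : 1 < p) (hpN : p < (N : ℝ) / α)
    (hq : p - 1 < q1 + q2) (hq2' : q2 < (N : ℝ) * (p - 1) / ((N : ℝ) - β * p))
    (hγ : (α * p * q1 + β * p * q2) / (q1 + q2) < (N : ℝ)) :
    ∃ C > 0, ∀ μ : Measure (Euc N), IsLocallyFiniteMeasure μ →
      ((∫⁻ x, (fracMax ((α * p * q1 + β * p * q2) / (q1 + q2)) ⊤ μ x) ^ ((q1 + q2) / (p - 1))) ≤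
          ENNReal.ofReal C *
            ∫⁻ x, (wolff ((α * q1 + β * q2) / (q1 + q2)) p ⊤ μ x) ^ (q1 + q2)) ∧
      ((∫⁻ x, (wolff ((α * q1 + β * q2) / (q1 + q2)) p ⊤ μ x) ^ (q1 + q2)) ≤
          ENNReal.ofReal C *
            ∫⁻ x, (fracMax ((α * p * q1 + β * p * q2) / (q1 + q2)) ⊤ μ x) ^ ((q1 + q2) / (p - 1))) ∧
      ((∫⁻ x, (wolff ((α * q1 + β * q2) / (q1 + q2)) p ⊤ μ x) ^ (q1 + q2)) ≤
          ENNReal.ofReal C *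
            ∫⁻ x, (wolff α p ⊤ μ x) ^ q1 * (wolff β p ⊤ μ x) ^ q2) ∧
      ((∫⁻ x, (wolff α p ⊤ μ x) ^ q1 * (wolff β p ⊤ μ x) ^ q2) ≤
          ENNReal.ofReal C *
            ∫⁻ x, (wolff ((α * q1 + β * q2) / (q1 + q2)) p ⊤ μ x) ^ (q1 + q2)) ∧
      ((∫⁻ x, (fracMax ((α * p * q1 + β * p * q2) / (q1 + q2)) ⊤ μ x) ^ ((q1 + q2) / (p - 1))) ≤
          ENNReal.ofReal C *
            ∫⁻ x, (wolff α p ⊤ μ x) ^ q1 * (wolff β p ⊤ μ x) ^ q2) ∧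
      ((∫⁻ x, (wolff α p ⊤ μ x) ^ q1 * (wolff β p ⊤ μ x) ^ q2) ≤
          ENNReal.ofReal C *
            ∫⁻ x, (fracMax ((α * p * q1 + β * p * q2) / (q1 + q2)) ⊤ μ x) ^ ((q1 + q2) / (p - 1))) := by
  obtain ⟨C, hC, h⟩ := stmt9_general N α β p q1 q2 hβ hq1 hq2 hαβ.le hp hpN hq2'
  exact ⟨C, hC, fun μ _ => h μ inferInstance⟩
end
end
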